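/- (Deception exponent with side information) For finite alphabets X, Y, Z, distortion measure d with ∀x ∃y d(x,y)=0, D ≥ 0, and (X^n, Z^n) i.i.d. with full-support joint distribution P on X × Z, the deception exponent with side information E_Z(D) = liminf_n (1/n) min_{S_Z^(n)} log E_P[G^(n)(X^n | Z^n)] equals max_Q [R_{X|Z}(D,Q) − D(Q‖P)], with the maximum over joint distributions Q on X × Z. -/

import Mathlib

open scoped BigOperators

/-- A probability distribution on a finite alphabet. -/
def IsProbDist {X : Type*} [Fintype X] (p : X → ℝ) : Prop :=
  (∀ x, 0 ≤ p x) ∧ ∑ x, p x = 1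

/-- Relative entropy (KL divergence), natural log, convention 0 log 0 = 0. -/
noncomputable def klDiv {X : Type*} [Fintype X] (Q P : X → ℝ) : ℝ :=
  ∑ x, Q x * Real.log (Q x / P x)

/-- Mutual information of the joint law Q(x)W(y|x). -/
noncomputable def mutualInfo {X Y : Type*} [Fintype X] [Fintype Y]
    (Q : X → ℝ) (W : X → Y → ℝ) : ℝ :=
  ∑ x, ∑ y, Q x * W x y * Real.log (W x y / (∑ x', Q x' * W x' y))

/-- Rate-distortion function `R(D,Q)`. -/
noncomputable def rateDistortion {X Y : Type*} [Fintype X] [Fintype Y]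
    (d : X → Y → ℝ) (D : ℝ) (Q : X → ℝ) : ℝ :=
  sInf {r | ∃ W : X → Y → ℝ, (∀ x y, 0 ≤ W x y) ∧ (∀ x, ∑ y, W x y = 1) ∧
    (∑ x, ∑ y, Q x * W x y * d x y) ≤ D ∧ r = mutualInfo Q W}

/-- Per-symbol mean distortion between two length-n sequences. -/
noncomputable def meanDist {X Y : Type*} (d : X → Y → ℝ) {n : ℕ}
    (x : Fin n → X) (y : Fin n → Y) : ℝ :=
  (1 / (n : ℝ)) * ∑ i, d (x i) (y i)

/-- Empirical distribution (type) of a sequence. -/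
noncomputable def empDist {X : Type*} [Fintype X] [DecidableEq X] {n : ℕ}
    (x : Fin n → X) (a : X) : ℝ :=
  ((Finset.univ.filter (fun i => x i = a)).card : ℝ) / n

/-- Counting function of an adversarial strategy list: 1-based index of the
first guess within mean distortion `D` of `x` (0 if none exists). -/
noncomputable def countG {X Y : Type*} (d : X → Y → ℝ) (D : ℝ) {n : ℕ}
    (S : List (Fin n → Y)) (x : Fin n → X) : ℕ :=
  sInf {j : ℕ | ∃ y ∈ S.take j, meanDist d x y ≤ D}

/-- n-fold product (i.i.d.) distribution. -/
noncomputable def prodDist {X : Type*} (P : X → ℝ) {n : ℕ} (x : Fin n → X) : ℝ :=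
  ∏ i, P (x i)

/-- Conditional mutual information `I(X;Y|Z)` under the joint law `Q(x,z)W(y|x,z)`. -/
noncomputable def condMutualInfo {X Z Y : Type*} [Fintype X] [Fintype Z] [Fintype Y]
    (Q : X → Z → ℝ) (W : X → Z → Y → ℝ) : ℝ :=
  ∑ x, ∑ z, ∑ y, Q x z * W x z y *
    Real.log (W x z y * (∑ x', Q x' z) / (∑ x', Q x' z * W x' z y))

/-- Conditional rate-distortion function `R_{X|Z}(D,Q)` (side information at both
encoder and decoder). -/
noncomputable def condRateDistortion {X Z Y : Type*} [Fintype X] [Fintype Z] [Fintype Y]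
    (d : X → Y → ℝ) (D : ℝ) (Q : X → Z → ℝ) : ℝ :=
  sInf {r | ∃ W : X → Z → Y → ℝ, (∀ x z y, 0 ≤ W x z y) ∧
    (∀ x z, ∑ y, W x z y = 1) ∧
    (∑ x, ∑ z, ∑ y, Q x z * W x z y * d x y) ≤ D ∧
    r = condMutualInfo Q W}

/-- A joint probability distribution on `X × Z`. -/
def IsJointProbDist {X Z : Type*} [Fintype X] [Fintype Z] (p : X → Z → ℝ) : Prop :=
  (∀ x z, 0 ≤ p x z) ∧ ∑ x, ∑ z, p x z = 1

/-- Relative entropy between joint distributions on `X × Z`. -/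
noncomputable def klDiv2 {X Z : Type*} [Fintype X] [Fintype Z]
    (Q P : X → Z → ℝ) : ℝ :=
  ∑ x, ∑ z, Q x z * Real.log (Q x z / P x z)

/-- Joint empirical distribution of a pair of sequences. -/
noncomputable def jointEmpDist {X Z : Type*} [DecidableEq X] [DecidableEq Z] {n : ℕ}
    (x : Fin n → X) (z : Fin n → Z) (a : X) (b : Z) : ℝ :=
  ((Finset.univ.filter (fun i : Fin n => x i = a ∧ z i = b)).card : ℝ) / n

/-- Tangent-line bound for `a ↦ a * log (a / b)` at slope parameter `t`. -/
theorem le_mul_log_div {a b t : ℝ} (ha : 0 ≤ a) (hb : 0 ≤ b) (hab : b = 0 → a = 0)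
    (ht : 0 < t) : a * Real.log t + a - b * t ≤ a * Real.log (a / b) := by
  rcases ha.eq_or_lt with rfl | ha
  · have := mul_nonneg hb ht.le
    simp [this]
  have hb : 0 < b := hb.lt_of_ne (fun h => ha.ne' (hab h.symm))
  have h1 := Real.log_le_sub_one_of_pos (show 0 < b * t / a by positivity)
  rw [Real.log_div (by positivity) ha.ne', Real.log_mul hb.ne' ht.ne'] at h1
  rw [Real.log_div ha.ne' hb.ne']
  have h2 := mul_le_mul_of_nonneg_left h1 ha.le
  have h3 : a * (b * t / a - 1) = b * t - a := by field_simp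
  linarith

/-- Two-term log-sum inequality. -/
theorem add_mul_log_div_add_le {a₁ a₂ b₁ b₂ : ℝ} (ha₁ : 0 ≤ a₁) (ha₂ : 0 ≤ a₂)
    (hb₁ : 0 ≤ b₁) (hb₂ : 0 ≤ b₂) (h₁ : b₁ = 0 → a₁ = 0) (h₂ : b₂ = 0 → a₂ = 0) :
    (a₁ + a₂) * Real.log ((a₁ + a₂) / (b₁ + b₂)) ≤
      a₁ * Real.log (a₁ / b₁) + a₂ * Real.log (a₂ / b₂) := by
  rcases (add_nonneg ha₁ ha₂).eq_or_lt with h | h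
  · have e₁ : a₁ = 0 := by linarith
    have e₂ : a₂ = 0 := by linarith
    simp [e₁, e₂]
  have hb : 0 < b₁ + b₂ := by
    refine (add_nonneg hb₁ hb₂).lt_of_ne fun hb => h.ne' ?_
    rw [h₁ (by linarith), h₂ (by linarith), add_zero]
  have ht : 0 < (a₁ + a₂) / (b₁ + b₂) := by positivity
  have k₁ := le_mul_log_div ha₁ hb₁ h₁ ht
  have k₂ := le_mul_log_div ha₂ hb₂ h₂ ht
  have k₃ : (b₁ + b₂) * ((a₁ + a₂) / (b₁ + b₂)) = a₁ + a₂ := by field_simp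
  nlinarith

/-- Expectation of a function of one coordinate under a product distribution. -/
theorem sum_prod_mul_apply {ι β : Type*} [Fintype ι] [DecidableEq ι] [Fintype β]
    (w : ι → β → ℝ) (hw : ∀ j, ∑ b, w j b = 1) (i : ι) (h : β → ℝ) :
    ∑ y : ι → β, (∏ j, w j (y j)) * h (y i) = ∑ b, w i b * h b := by
  have key : ∀ y : ι → β, (∏ j, w j (y j)) * h (y i) =
      ∏ j, (w j (y j) * if j = i then h (y j) else 1) := fun y => by
    rw [Finset.prod_mul_distrib, Finset.prod_ite_eq' Finset.univ i]
    simp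
  simp_rw [key]
  rw [← Fintype.piFinset_univ,
    ← Finset.prod_univ_sum (fun _ => Finset.univ)
      (fun j b => w j b * if j = i then h b else 1),
    Finset.prod_eq_single i]
  · simp
  · intro j _ hj
    simp [hj, hw]
  · simp

theorem sum_prod_apply {ι β : Type*} [Fintype ι] [DecidableEq ι] [Fintype β]
    (w : ι → β → ℝ) : ∑ y : ι → β, ∏ j, w j (y j) = ∏ j, ∑ b, w j b := by
  rw [Finset.prod_univ_sum, Fintype.piFinset_univ]

theorem sum_sum_fun_eq_sum_fun_prod {ι X Z : Type*} [Fintype ι] [DecidableEq ι]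
    [Fintype X] [Fintype Z] (F : (ι → X) → (ι → Z) → ℝ) :
    ∑ x : ι → X, ∑ z : ι → Z, F x z =
      ∑ u : ι → X × Z, F (fun i => (u i).1) (fun i => (u i).2) := by
  rw [← Fintype.sum_prod_type']
  exact (Fintype.sum_equiv (Equiv.arrowProdEquivProdArrow ι (fun _ => X) (fun _ => Z)) _ _
    (fun _ => rfl)).symm

/-- Expectation of a function of one coordinate pair under an i.i.d. joint law. -/
theorem sum_sum_prod_mul_apply {ι X Z : Type*} [Fintype ι] [DecidableEq ι]
    [Fintype X] [Fintype Z] {Q : X → Z → ℝ} (hQ : ∑ a, ∑ b, Q a b = 1) (i : ι)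
    (h : X → Z → ℝ) :
    ∑ x : ι → X, ∑ z : ι → Z, (∏ j, Q (x j) (z j)) * h (x i) (z i) =
      ∑ a, ∑ b, Q a b * h a b := by
  rw [sum_sum_fun_eq_sum_fun_prod (fun x z => (∏ j, Q (x j) (z j)) * h (x i) (z i))]
  rw [sum_prod_mul_apply (fun _ (u : X × Z) => Q u.1 u.2)
    (fun _ => by rw [Fintype.sum_prod_type]; exact hQ) i (fun u => h u.1 u.2),
    Fintype.sum_prod_type]

theorem sum_sum_prod_apply {ι X Z : Type*} [Fintype ι] [DecidableEq ι]
    [Fintype X] [Fintype Z] {Q : X → Z → ℝ} (hQ : ∑ a, ∑ b, Q a b = 1) :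
    ∑ x : ι → X, ∑ z : ι → Z, ∏ j, Q (x j) (z j) = 1 := by
  rw [sum_sum_fun_eq_sum_fun_prod (fun x z => ∏ j, Q (x j) (z j)),
    sum_prod_apply (fun _ (u : X × Z) => Q u.1 u.2)]
  simp [Fintype.sum_prod_type, hQ]

/-- Relative entropy of finite probability vectors is nonnegative. -/
theorem sum_mul_log_div_nonneg {Y : Type*} [Fintype Y] {w q : Y → ℝ} (hw : ∀ y, 0 ≤ w y)
    (hq : ∀ y, 0 ≤ q y)
    (hw1 : ∑ y, w y = 1) (hq1 : ∑ y, q y = 1) (h : ∀ y, q y = 0 → w y = 0) :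
    0 ≤ ∑ y, w y * Real.log (w y / q y) := by
  have := Finset.sum_le_sum fun y (_ : y ∈ Finset.univ) =>
    le_mul_log_div (hw y) (hq y) (h y) one_pos
  simpa [Finset.sum_sub_distrib, hw1, hq1] using this

theorem sum_ne_zero_of_apply_ne_zero {X Z : Type*} [Fintype X]
    {Q : X → Z → ℝ} (hQ : ∀ a b, 0 ≤ Q a b) {a : X} {b : Z}
    (h : Q a b ≠ 0) : ∑ a', Q a' b ≠ 0 := fun h0 =>
  h ((Finset.sum_eq_zero_iff_of_nonneg fun a _ => hQ a b).1 h0 a (Finset.mem_univ a))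

/-- The output law `q(y|z)` induced by `Q(x,z)` and `W(y|x,z)`, set to `W(·|x₀,z)` for an
arbitrary `x₀` when `z` has probability zero. -/
noncomputable def outputLaw {X Z Y : Type*} [Fintype X] [Nonempty X]
    (Q : X → Z → ℝ) (W : X → Z → Y → ℝ) (b : Z) (y : Y) : ℝ :=
  open Classical in
  if ∑ a, Q a b = 0 then W (Classical.arbitrary X) b y
  else (∑ a, Q a b * W a b y) / ∑ a, Q a b

section OutputLaw

variable {X Z Y : Type*} [Fintype X] [Nonempty X] {Q : X → Z → ℝ}
  {W : X → Z → Y → ℝ}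

theorem outputLaw_nonneg (hQ : ∀ a b, 0 ≤ Q a b) (hW : ∀ a b y, 0 ≤ W a b y) (b : Z) (y : Y) :
    0 ≤ outputLaw Q W b y := by
  unfold outputLaw
  split_ifs
  · exact hW _ _ _
  · exact div_nonneg (Finset.sum_nonneg fun a _ => mul_nonneg (hQ a b) (hW a b y))
      (Finset.sum_nonneg fun a _ => hQ a b)

theorem eq_zero_of_outputLaw_eq_zero (hQ : ∀ a b, 0 ≤ Q a b) (hW : ∀ a b y, 0 ≤ W a b y)
    {a : X} {b : Z} {y : Y} (h : Q a b ≠ 0) (h0 : outputLaw Q W b y = 0) : W a b y = 0 := by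
  have hs := sum_ne_zero_of_apply_ne_zero hQ h
  rw [outputLaw, if_neg hs, div_eq_zero_iff, or_iff_left hs,
    Finset.sum_eq_zero_iff_of_nonneg fun a _ => mul_nonneg (hQ a b) (hW a b y)] at h0
  exact (mul_eq_zero.1 (h0 a (Finset.mem_univ a))).resolve_left h

variable [Fintype Y]

theorem sum_outputLaw (hW : ∀ a b, ∑ y, W a b y = 1) (b : Z) :
    ∑ y, outputLaw Q W b y = 1 := by
  unfold outputLaw
  split_ifs with h
  · exact hW _ _
  · rw [← Finset.sum_div, Finset.sum_comm]
    simp_rw [← Finset.mul_sum, hW, mul_one]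
    exact div_self h

variable [Fintype Z]

theorem condMutualInfo_eq_outputLaw (hQ : ∀ a b, 0 ≤ Q a b) :
    condMutualInfo Q W =
      ∑ a, ∑ b, Q a b * ∑ y, W a b y * Real.log (W a b y / outputLaw Q W b y) := by
  unfold condMutualInfo
  refine Finset.sum_congr rfl fun a _ => Finset.sum_congr rfl fun b _ => ?_
  rw [Finset.mul_sum]
  refine Finset.sum_congr rfl fun y _ => ?_
  by_cases h : Q a b = 0
  · simp [h]
  · have hs := sum_ne_zero_of_apply_ne_zero hQ h
    rw [outputLaw, if_neg hs, div_div_eq_mul_div, mul_assoc]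

theorem condMutualInfo_nonneg (hQ : ∀ a b, 0 ≤ Q a b) (hW : ∀ a b y, 0 ≤ W a b y)
    (hW1 : ∀ a b, ∑ y, W a b y = 1) : 0 ≤ condMutualInfo Q W := by
  rw [condMutualInfo_eq_outputLaw hQ]
  refine Finset.sum_nonneg fun a _ => Finset.sum_nonneg fun b _ => ?_
  by_cases h : Q a b = 0
  · simp [h]
  · exact mul_nonneg (hQ a b) (sum_mul_log_div_nonneg (hW a b)
      (outputLaw_nonneg hQ hW b) (hW1 a b) (sum_outputLaw hW1 b)
      fun y => eq_zero_of_outputLaw_eq_zero hQ hW h)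

theorem condRateDistortion_le {d : X → Y → ℝ} {D : ℝ} (hQ : ∀ a b, 0 ≤ Q a b)
    (hW : ∀ a b y, 0 ≤ W a b y) (hW1 : ∀ a b, ∑ y, W a b y = 1)
    (hD : ∑ a, ∑ b, ∑ y, Q a b * W a b y * d a y ≤ D) :
    condRateDistortion d D Q ≤ condMutualInfo Q W := by
  refine csInf_le ⟨0, ?_⟩ ⟨W, hW, hW1, hD, rfl⟩
  rintro r ⟨W', h, h1, -, rfl⟩
  exact condMutualInfo_nonneg hQ h h1

end OutputLaw

/-- The law of `φ i s` for `s` drawn with weights `p` and `i` drawn uniformly. -/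
noncomputable def averagedLaw {Ω ι T : Type*} [Fintype Ω] [Fintype ι] (p : Ω → ℝ)
    (φ : ι → Ω → T) (t : T) : ℝ :=
  open Classical in
  (1 / (Fintype.card ι : ℝ)) * ∑ s, p s * ∑ i, if φ i s = t then 1 else 0

section AveragedLaw

variable {Ω ι T : Type*} [Fintype Ω] [Fintype ι] {p : Ω → ℝ} {φ : ι → Ω → T}

theorem averagedLaw_nonneg (hp : ∀ s, 0 ≤ p s) (t : T) : 0 ≤ averagedLaw p φ t := by
  unfold averagedLaw
  refine mul_nonneg (by positivity) (Finset.sum_nonneg fun s _ => mul_nonneg (hp s)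
    (Finset.sum_nonneg fun i _ => ?_))
  split_ifs <;> norm_num

theorem averagedLaw_pos (hp : ∀ s, 0 ≤ p s) {s : Ω} (hs : 0 < p s) (i : ι) :
    0 < averagedLaw p φ (φ i s) := by
  classical
  unfold averagedLaw
  have : Nonempty ι := ⟨i⟩
  have h0 : ∀ s' i', (0 : ℝ) ≤ if φ i' s' = φ i s then 1 else 0 := fun _ _ => by
    split_ifs <;> norm_num
  refine mul_pos (by positivity) (Finset.sum_pos' (fun s' _ => mul_nonneg (hp s')
    (Finset.sum_nonneg fun i' _ => h0 s' i')) ⟨s, Finset.mem_univ s, mul_pos hs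
      (Finset.sum_pos' (fun i' _ => h0 s i') ⟨i, Finset.mem_univ i, by simp⟩)⟩)

theorem sum_averagedLaw_mul [Fintype T] (g : T → ℝ) :
    ∑ t, averagedLaw p φ t * g t =
      (1 / (Fintype.card ι : ℝ)) * ∑ s, p s * ∑ i, g (φ i s) := by
  classical
  unfold averagedLaw
  simp_rw [mul_assoc, ← Finset.mul_sum, Finset.sum_mul]
  rw [Finset.sum_comm]
  simp_rw [mul_assoc, ← Finset.mul_sum, Finset.sum_mul]
  congr 1
  refine Finset.sum_congr rfl fun s _ => ?_
  rw [Finset.sum_comm]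
  simp

end AveragedLaw

/-- Converse: for every test distribution `Q`, guessing reconstructions `f x z` with cost `G x z`
dominated by the code lengths of subprobabilities `q z` costs at least `R(D,Q) - D(Q‖P)` per
symbol in the exponent. -/
theorem mul_condRateDistortion_sub_klDiv2_le {X Z Y : Type*} [Fintype X] [Fintype Z] [Fintype Y]
    [Nonempty X] [Nonempty Z] [Nonempty Y] {d : X → Y → ℝ} {D : ℝ}
    {P Q : X → Z → ℝ} (hP : ∀ a b, 0 < P a b) (hQ : IsJointProbDist Q)
    {n : ℕ} (hn : 0 < n) {f : (Fin n → X) → (Fin n → Z) → Fin n → Y}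
    (hf : ∀ x z, meanDist d x (f x z) ≤ D) {G : (Fin n → X) → (Fin n → Z) → ℝ}
    (hG : ∀ x z, 0 < G x z) {q : (Fin n → Z) → (Fin n → Y) → ℝ} (hq : ∀ z y, 0 ≤ q z y)
    (hq1 : ∀ z, ∑ y, q z y ≤ 1) {c : ℝ} (hc : 0 < c)
    (hqG : ∀ x z, 1 ≤ c * q z (f x z) * G x z) :
    n * (condRateDistortion d D Q - klDiv2 Q P) ≤
      Real.log (∑ x : Fin n → X, ∑ z : Fin n → Z, (∏ i, P (x i) (z i)) * G x z) +
        Real.log c := by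
  classical
  have : Nonempty (Fin n) := ⟨⟨0, hn⟩⟩
  have hnR : (0 : ℝ) < n := by exact_mod_cast hn
  obtain ⟨hQ0, hQ1⟩ := hQ
  set p : (Fin n → X) × (Fin n → Z) → ℝ := fun s => ∏ i, Q (s.1 i) (s.2 i) with hp
  have hp0 : ∀ s, 0 ≤ p s := fun s => Finset.prod_nonneg fun i _ => hQ0 _ _
  set φ : Fin n → (Fin n → X) × (Fin n → Z) → X × Z × Y :=
    fun i s => (s.1 i, s.2 i, f s.1 s.2 i) with hφ
  set M : X → Z → Y → ℝ := fun a b y => averagedLaw p φ (a, b, y) with hM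
  have hM0 : ∀ a b y, 0 ≤ M a b y := fun a b y => averagedLaw_nonneg hp0 _
  have hMsum : ∀ g : X → Z → Y → ℝ, ∑ a, ∑ b, ∑ y, M a b y * g a b y =
      (1 / (n : ℝ)) * ∑ s, p s * ∑ i, g (s.1 i) (s.2 i) (f s.1 s.2 i) := fun g => by
    have := sum_averagedLaw_mul (p := p) (φ := φ) (fun t => g t.1 t.2.1 t.2.2)
    simpa [Fintype.sum_prod_type, hM, hφ] using this
  have hcoord : ∀ h : X → Z → ℝ, ∑ s, p s * ∑ i, h (s.1 i) (s.2 i) =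
      n * ∑ a, ∑ b, Q a b * h a b := fun h => by
    simp_rw [Finset.mul_sum (s := (Finset.univ : Finset (Fin n)))]
    rw [Finset.sum_comm]
    simp_rw [Fintype.sum_prod_type, hp, sum_sum_prod_mul_apply hQ1]
    simp
  have hMQ : ∀ a b, ∑ y, M a b y = Q a b := fun a b => by
    have h1 := hMsum (fun a' b' _ => if a' = a then if b' = b then 1 else 0 else 0)
    rw [hcoord (fun a' b' => if a' = a then if b' = b then 1 else 0 else 0)] at h1
    have h2 : ∀ r : ℝ, 1 / (n : ℝ) * (n * r) = r := fun r => by field_simp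
    rw [h2] at h1
    simpa using h1
  have hMzero : ∀ {a b}, Q a b = 0 → ∀ y, M a b y = 0 := fun {a b} h y =>
    (Finset.sum_eq_zero_iff_of_nonneg fun y _ => hM0 a b y).1 ((hMQ a b).trans h) y
      (Finset.mem_univ y)
  set W : X → Z → Y → ℝ := fun a b y =>
    if Q a b = 0 then 1 / (Fintype.card Y : ℝ) else M a b y / Q a b with hW
  have hQW : ∀ a b y, Q a b * W a b y = M a b y := fun a b y => by
    by_cases h : Q a b = 0
    · simp [h, hMzero h]
    · simp only [hW, if_neg h]
      field_simp
  have hW0 : ∀ a b y, 0 ≤ W a b y := fun a b y => by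
    simp only [hW]
    split_ifs
    · positivity
    · exact div_nonneg (hM0 a b y) (hQ0 a b)
  have hW1 : ∀ a b, ∑ y, W a b y = 1 := fun a b => by
    by_cases h : Q a b = 0
    · simp [hW, h]
    · simp only [hW, if_neg h]
      rw [← Finset.sum_div, hMQ, div_self h]
  set Qz : Z → ℝ := fun b => ∑ a, Q a b with hQz
  have hQz0 : ∀ b, 0 ≤ Qz b := fun b => Finset.sum_nonneg fun a _ => hQ0 a b
  set V : X → Z → Y → ℝ := fun a b y => M a b y / ∑ a', M a' b y with hV
  have hV0 : ∀ a b y, 0 ≤ V a b y := fun a b y =>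
    div_nonneg (hM0 a b y) (Finset.sum_nonneg fun a' _ => hM0 a' b y)
  have hV1 : ∀ b y, ∑ a, V a b y ≤ 1 := fun b y => by
    rw [← Finset.sum_div]
    exact div_self_le_one _
  have hdist : ∑ a, ∑ b, ∑ y, Q a b * W a b y * d a y ≤ D := by
    simp_rw [hQW]
    rw [hMsum (fun a _ y => d a y), Finset.mul_sum]
    calc ∑ s, 1 / (n : ℝ) * (p s * ∑ i, d (s.1 i) (f s.1 s.2 i))
        = ∑ s, p s * meanDist d s.1 (f s.1 s.2) := by
          refine Finset.sum_congr rfl fun s _ => ?_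
          rw [meanDist]
          ring
      _ ≤ ∑ s, p s * D :=
          Finset.sum_le_sum fun s _ => mul_le_mul_of_nonneg_left (hf _ _) (hp0 s)
      _ = D := by
          rw [← Finset.sum_mul, Fintype.sum_prod_type]
          simp only [hp]
          rw [sum_sum_prod_apply hQ1, one_mul]
  have hR := condRateDistortion_le hQ0 hW0 hW1 hdist
  have hI : condMutualInfo Q W =
      ∑ a, ∑ b, ∑ y, M a b y * Real.log (V a b y * Qz b / Q a b) := by
    unfold condMutualInfo
    refine Finset.sum_congr rfl fun a _ => Finset.sum_congr rfl fun b _ =>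
      Finset.sum_congr rfl fun y _ => ?_
    simp_rw [hQW]
    by_cases h : Q a b = 0
    · simp [hMzero h]
    · simp only [hW, hV, hQz, if_neg h]
      congr 2
      ring
  have hIn : (n : ℝ) * condMutualInfo Q W =
      ∑ s, p s * ∑ i, Real.log (V (s.1 i) (s.2 i) (f s.1 s.2 i) * Qz (s.2 i) /
        Q (s.1 i) (s.2 i)) := by
    rw [hI, hMsum (fun a b y => Real.log (V a b y * Qz b / Q a b))]
    field_simp
  have hKn : (n : ℝ) * klDiv2 Q P =
      ∑ s, p s * ∑ i, Real.log (Q (s.1 i) (s.2 i) / P (s.1 i) (s.2 i)) := by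
    rw [hcoord (fun a b => Real.log (Q a b / P a b)), klDiv2]
  set A := ∑ x : Fin n → X, ∑ z : Fin n → Z, (∏ i, P (x i) (z i)) * G x z with hA
  have hA0 : 0 < A := by
    refine Finset.sum_pos (fun x _ => Finset.sum_pos (fun z _ => mul_pos
      (Finset.prod_pos fun i _ => hP _ _) (hG x z)) Finset.univ_nonempty) Finset.univ_nonempty
  set T₁ : (Fin n → X) × (Fin n → Z) → ℝ := fun s =>
    (∏ i, Qz (s.2 i)) * ((∏ i, V (s.1 i) (s.2 i) (f s.1 s.2 i)) * q s.2 (f s.1 s.2)) with hT₁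
  set T₂ : (Fin n → X) × (Fin n → Z) → ℝ := fun s =>
    (∏ i, P (s.1 i) (s.2 i)) * G s.1 s.2 / A with hT₂
  have hT₁sum : ∑ s, T₁ s ≤ 1 := by
    have hx : ∀ z, ∑ x : Fin n → X, (∏ i, V (x i) (z i) (f x z i)) * q z (f x z) ≤ 1 := by
      intro z
      calc ∑ x : Fin n → X, (∏ i, V (x i) (z i) (f x z i)) * q z (f x z)
          ≤ ∑ x : Fin n → X, ∑ y : Fin n → Y, (∏ i, V (x i) (z i) (y i)) * q z y :=
            Finset.sum_le_sum fun x _ => Finset.single_le_sum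
              (f := fun y : Fin n → Y => (∏ i, V (x i) (z i) (y i)) * q z y)
              (fun y _ => mul_nonneg (Finset.prod_nonneg fun i _ => hV0 _ _ _) (hq z y))
              (Finset.mem_univ (f x z))
        _ = ∑ y : Fin n → Y, (∏ i, ∑ a, V a (z i) (y i)) * q z y := by
            rw [Finset.sum_comm]
            refine Finset.sum_congr rfl fun y _ => ?_
            rw [← Finset.sum_mul, sum_prod_apply (fun i a => V a (z i) (y i))]
        _ ≤ ∑ y : Fin n → Y, 1 * q z y :=
            Finset.sum_le_sum fun y _ => mul_le_mul_of_nonneg_right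
              (Finset.prod_le_one (fun i _ => Finset.sum_nonneg fun a _ => hV0 _ _ _)
                fun i _ => hV1 _ _) (hq z y)
        _ ≤ 1 := by simpa using hq1 z
    rw [Fintype.sum_prod_type_right]
    calc ∑ z : Fin n → Z, ∑ x : Fin n → X, T₁ (x, z)
        ≤ ∑ z : Fin n → Z, (∏ i, Qz (z i)) * 1 := by
          refine Finset.sum_le_sum fun z _ => ?_
          simp only [hT₁]
          rw [← Finset.mul_sum]
          exact mul_le_mul_of_nonneg_left (hx z) (Finset.prod_nonneg fun i _ => hQz0 _)
      _ = 1 := by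
          simp_rw [mul_one]
          rw [sum_prod_apply (fun _ b => Qz b)]
          simp only [hQz]
          rw [Finset.sum_comm, hQ1]
          simp
  have hT₂sum : ∑ s, T₂ s = 1 := by
    simp only [hT₂]
    rw [← Finset.sum_div, Fintype.sum_prod_type, ← hA, div_self hA0.ne']
  have hpsum : ∑ s, p s = 1 := by
    rw [Fintype.sum_prod_type]
    exact sum_sum_prod_apply hQ1
  have hpoint : ∀ s, p s * (∑ i, Real.log (V (s.1 i) (s.2 i) (f s.1 s.2 i) * Qz (s.2 i) /
        Q (s.1 i) (s.2 i))) - p s * (∑ i, Real.log (Q (s.1 i) (s.2 i) / P (s.1 i) (s.2 i)))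
        - p s * (Real.log A + Real.log c) ≤ T₁ s + T₂ s - 2 * p s := by
    intro s
    have hT₁0 : 0 ≤ T₁ s := mul_nonneg (Finset.prod_nonneg fun i _ => hQz0 _)
      (mul_nonneg (Finset.prod_nonneg fun i _ => hV0 _ _ _) (hq _ _))
    have hPs : 0 < ∏ i, P (s.1 i) (s.2 i) := Finset.prod_pos fun i _ => hP _ _
    have hT₂0 : 0 < T₂ s := div_pos (mul_pos hPs (hG _ _)) hA0
    rcases (hp0 s).eq_or_lt with h | h
    · rw [← h]
      linarith
    have hQi : ∀ i, 0 < Q (s.1 i) (s.2 i) := fun i =>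
      (hQ0 _ _).lt_of_ne fun h0 => h.ne' (Finset.prod_eq_zero (Finset.mem_univ i) h0.symm)
    have hMi : ∀ i, 0 < M (s.1 i) (s.2 i) (f s.1 s.2 i) := fun i =>
      averagedLaw_pos (φ := φ) hp0 h i
    have hVi : ∀ i, 0 < V (s.1 i) (s.2 i) (f s.1 s.2 i) := fun i =>
      div_pos (hMi i) (Finset.sum_pos' (fun a _ => hM0 a _ _) ⟨s.1 i, Finset.mem_univ _, hMi i⟩)
    have hQzi : ∀ i, 0 < Qz (s.2 i) := fun i =>
      Finset.sum_pos' (fun a _ => hQ0 a _) ⟨s.1 i, Finset.mem_univ _, hQi i⟩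
    have hqs : 0 < q s.2 (f s.1 s.2) := by
      refine (hq _ _).lt_of_ne fun h0 => ?_
      have := hqG s.1 s.2
      rw [← h0] at this
      norm_num at this
    have e₁ : ∑ i, Real.log (V (s.1 i) (s.2 i) (f s.1 s.2 i) * Qz (s.2 i) /
        Q (s.1 i) (s.2 i)) = Real.log (∏ i, V (s.1 i) (s.2 i) (f s.1 s.2 i)) +
          Real.log (∏ i, Qz (s.2 i)) - Real.log (p s) := by
      rw [Real.log_prod fun i _ => (hVi i).ne', Real.log_prod fun i _ => (hQzi i).ne',
        Real.log_prod fun i _ => (hQi i).ne', ← Finset.sum_add_distrib,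
        ← Finset.sum_sub_distrib]
      refine Finset.sum_congr rfl fun i _ => ?_
      rw [Real.log_div (mul_pos (hVi i) (hQzi i)).ne' (hQi i).ne',
        Real.log_mul (hVi i).ne' (hQzi i).ne']
    have e₂ : ∑ i, Real.log (Q (s.1 i) (s.2 i) / P (s.1 i) (s.2 i)) =
        Real.log (p s) - Real.log (∏ i, P (s.1 i) (s.2 i)) := by
      rw [Real.log_prod fun i _ => (hQi i).ne', Real.log_prod fun i _ => (hP _ _).ne',
        ← Finset.sum_sub_distrib]
      exact Finset.sum_congr rfl fun i _ => Real.log_div (hQi i).ne' (hP _ _).ne'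
    have hVp : 0 < ∏ i, V (s.1 i) (s.2 i) (f s.1 s.2 i) := Finset.prod_pos fun i _ => hVi i
    have hQp : 0 < ∏ i, Qz (s.2 i) := Finset.prod_pos fun i _ => hQzi i
    have l₁ := Real.log_le_sub_one_of_pos (show 0 < T₁ s / p s from
      div_pos (mul_pos hQp (mul_pos hVp hqs)) h)
    have l₂ := Real.log_le_sub_one_of_pos (div_pos hT₂0 h)
    have l₃ := Real.log_nonneg (hqG s.1 s.2)
    rw [Real.log_mul (by positivity) (hG _ _).ne', Real.log_mul hc.ne' hqs.ne'] at l₃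
    have e₃ : Real.log (T₁ s / p s) = Real.log (∏ i, Qz (s.2 i)) +
        (Real.log (∏ i, V (s.1 i) (s.2 i) (f s.1 s.2 i)) + Real.log (q s.2 (f s.1 s.2)))
          - Real.log (p s) := by
      rw [Real.log_div (mul_pos hQp (mul_pos hVp hqs)).ne' h.ne',
        Real.log_mul hQp.ne' (mul_pos hVp hqs).ne', Real.log_mul hVp.ne' hqs.ne']
    have e₄ : Real.log (T₂ s / p s) = Real.log (∏ i, P (s.1 i) (s.2 i)) +
        Real.log (G s.1 s.2) - Real.log A - Real.log (p s) := by
      rw [Real.log_div hT₂0.ne' h.ne', Real.log_div (mul_pos hPs (hG _ _)).ne' hA0.ne',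
        Real.log_mul hPs.ne' (hG _ _).ne']
    rw [e₁, e₂, ← mul_sub, ← mul_sub]
    have m₁ : p s * (T₁ s / p s - 1 + (T₂ s / p s - 1)) = T₁ s + T₂ s - 2 * p s := by
      field_simp
      ring
    rw [← m₁]
    exact mul_le_mul_of_nonneg_left (by linarith) h.le
  have hsum := Finset.sum_le_sum fun s (_ : s ∈ Finset.univ) => hpoint s
  rw [Finset.sum_sub_distrib, Finset.sum_sub_distrib, Finset.sum_sub_distrib,
    Finset.sum_add_distrib, ← hIn, ← hKn, ← Finset.sum_mul, ← Finset.mul_sum, hpsum,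
    hT₂sum] at hsum
  have := mul_le_mul_of_nonneg_left hR hnR.le
  linarith

/-- Among finite sets of naturals of given size, an initial segment maximizes `∑ 1 / (k + 1)`. -/
theorem sum_one_div_succ_le_harmonic (s : Finset ℕ) :
    ∑ k ∈ s, (1 : ℝ) / (k + 1) ≤ harmonic s.card := by
  induction s using Finset.induction_on_max with
  | empty => simp
  | insert m s hm ih =>
    have hms : m ∉ s := fun h => lt_irrefl _ (hm m h)
    have hcard : s.card ≤ m := by
      simpa using Finset.card_le_card (fun k hk => Finset.mem_range.2 (hm k hk) :
        s ⊆ Finset.range m)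
    rw [Finset.sum_insert hms, Finset.card_insert_of_notMem hms, harmonic_succ]
    have : (1 : ℝ) / (m + 1) ≤ 1 / (s.card + 1) := by gcongr
    push_cast
    rw [one_div] at this ⊢
    rw [one_div] at this
    linarith

theorem sum_one_div_idxOf_le {β : Type*} [Fintype β] [DecidableEq β] (S : List β) :
    ∑ y, (if y ∈ S then (1 : ℝ) / (S.idxOf y + 1) else 0) ≤
      1 + Real.log (Fintype.card β) := by
  have hinj : Set.InjOn (fun y => S.idxOf y) (S.toFinset : Set β) := fun y hy y' _ h =>
    (List.idxOf_inj (by simpa using hy)).1 h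
  have h := sum_one_div_succ_le_harmonic (S.toFinset.image fun y => S.idxOf y)
  rw [Finset.sum_image hinj] at h
  have hcard : (S.toFinset.image fun y => S.idxOf y).card ≤ Fintype.card β :=
    Finset.card_image_le.trans (Finset.card_le_univ _)
  have hmono : ((harmonic (S.toFinset.image fun y => S.idxOf y).card : ℚ) : ℝ) ≤
      harmonic (Fintype.card β) := by
    unfold harmonic
    push_cast
    exact Finset.sum_le_sum_of_subset_of_nonneg
      (Finset.range_subset_range.2 hcard) fun _ _ _ => by positivity
  rw [← Finset.sum_filter]
  have : Finset.univ.filter (fun y => y ∈ S) = S.toFinset := by ext; simp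
  rw [this]
  exact h.trans (hmono.trans (harmonic_le_one_add_log _))

theorem exists_mem_take_countG {X Y : Type*} {d : X → Y → ℝ} {D : ℝ} {n : ℕ}
    {S : List (Fin n → Y)} {x : Fin n → X} (h : ∃ y ∈ S, meanDist d x y ≤ D) :
    ∃ y ∈ S.take (countG d D S x), meanDist d x y ≤ D := by
  refine Nat.sInf_mem (s := {j : ℕ | ∃ y ∈ S.take j, meanDist d x y ≤ D}) ⟨S.length, ?_⟩
  simpa using h

/-- Every admissible guessing strategy has exponent at least `R(D,Q) - D(Q‖P)`, up to a
logarithmic term. -/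
theorem mul_sub_le_log_sum_countG {X Z Y : Type*} [Fintype X] [Fintype Z] [Fintype Y]
    [Nonempty X] [Nonempty Z] [Nonempty Y] {d : X → Y → ℝ} {D : ℝ}
    {P Q : X → Z → ℝ} (hP : ∀ a b, 0 < P a b) (hQ : IsJointProbDist Q)
    {n : ℕ} (hn : 0 < n) {St : (Fin n → Z) → List (Fin n → Y)}
    (hSt : ∀ (z : Fin n → Z) (x : Fin n → X), ∃ y ∈ St z, meanDist d x y ≤ D) :
    n * (condRateDistortion d D Q - klDiv2 Q P) ≤
      Real.log (∑ x : Fin n → X, ∑ z : Fin n → Z,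
        (∏ i, P (x i) (z i)) * (countG d D (St z) x : ℝ)) +
        Real.log (1 + n * Real.log (Fintype.card Y)) := by
  classical
  choose f hfmem hf using fun x z => exists_mem_take_countG (hSt z x)
  have hlog : 0 ≤ Real.log (Fintype.card Y) := Real.log_natCast_nonneg _
  set c := 1 + n * Real.log (Fintype.card Y) with hc
  have hc0 : 0 < c := by positivity
  have hidx : ∀ x z, (St z).idxOf (f x z) < countG d D (St z) x := fun x z =>
    List.mem_take_iff_idxOf_lt (List.mem_of_mem_take (hfmem x z)) |>.1 (hfmem x z)
  refine mul_condRateDistortion_sub_klDiv2_le hP hQ hn hf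
    (G := fun x z => (countG d D (St z) x : ℝ))
    (q := fun z y => (if y ∈ St z then (1 : ℝ) / ((St z).idxOf y + 1) else 0) / c)
    (fun x z => ?_) (fun z y => ?_) (fun z => ?_) hc0 (fun x z => ?_)
  · exact_mod_cast (Nat.zero_le _).trans_lt (hidx x z)
  · refine div_nonneg ?_ hc0.le
    split_ifs <;> positivity
  · rw [← Finset.sum_div, div_le_one hc0]
    refine (sum_one_div_idxOf_le (St z)).trans_eq ?_
    simp [hc]
  · rw [if_pos (List.mem_of_mem_take (hfmem x z)), mul_div_cancel₀ _ hc0.ne', one_div,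
      inv_mul_eq_div, one_le_div (by positivity)]
    exact_mod_cast hidx x z

/-- Position (1-based) of the first entry `y` of `S` with `C y`. -/
noncomputable def firstHit {β : Type*} (C : β → Prop) (S : List β) : ℕ :=
  sInf {j : ℕ | ∃ y ∈ S.take j, C y}

theorem firstHit_cons_le_one {β : Type*} {C : β → Prop} {y : β} (h : C y) (S : List β) :
    firstHit C (y :: S) ≤ 1 :=
  Nat.sInf_le ⟨y, by simp, h⟩

theorem firstHit_le_length {β : Type*} {C : β → Prop} {S : List β} (h : ∃ y ∈ S, C y) :
    firstHit C S ≤ S.length :=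
  Nat.sInf_le (by simpa using h)

theorem firstHit_cons_le {β : Type*} {C : β → Prop} {S : List β} (h : ∃ y ∈ S, C y) (y : β) :
    firstHit C (y :: S) ≤ firstHit C S + 1 := by
  obtain ⟨y', hy', hC⟩ := Nat.sInf_mem (s := {j : ℕ | ∃ y ∈ S.take j, C y})
    ⟨S.length, by simpa using h⟩
  exact Nat.sInf_le ⟨y', by rw [List.take_succ_cons]; exact List.mem_cons_of_mem _ hy', hC⟩

theorem exists_le_of_sum_mul_le {β : Type*} [Fintype β] {q F : β → ℝ} {r : ℝ}
    (hq : ∀ y, 0 ≤ q y) (hq1 : ∑ y, q y = 1) (h : ∑ y, q y * F y ≤ r) : ∃ y, F y ≤ r := by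
  by_contra! hr
  have hle : ∀ y ∈ Finset.univ, q y * r ≤ q y * F y := fun y _ =>
    mul_le_mul_of_nonneg_left (hr y).le (hq y)
  have hlt : ∃ y ∈ Finset.univ, 0 < q y := Finset.exists_lt_of_sum_lt (by simp [hq1])
  obtain ⟨y, hy, hy0⟩ := hlt
  have := Finset.sum_lt_sum hle ⟨y, hy, mul_lt_mul_of_pos_left (hr y) hy0⟩
  rw [← Finset.sum_mul, hq1] at this
  linarith

open Classical in
/-- Derandomized guessing: prefixing a complete list by `N` guesses chosen greedily against `q`
does at least as well as `N` independent random guesses from `q`. -/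
theorem exists_list_sum_mul_firstHit_le {α β : Type*} [Fintype α] [Fintype β]
    (C : α → β → Prop) {q : β → ℝ} (hq : ∀ y, 0 ≤ q y) (hq1 : ∑ y, q y = 1)
    (hp : ∀ x, 0 < ∑ y, if C x y then q y else 0) (L : List β) (hL : ∀ x, ∃ y ∈ L, C x y)
    (N : ℕ) : ∀ w : α → ℝ, (∀ x, 0 ≤ w x) → ∃ S : List β, (∀ x, ∃ y ∈ S, C x y) ∧
      ∑ x, w x * (firstHit (C x) S : ℝ) ≤
        ∑ x, w x * (1 / (∑ y, if C x y then q y else 0) +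
          (1 - ∑ y, if C x y then q y else 0) ^ N * L.length) := by
  set p : α → ℝ := fun x => ∑ y, if C x y then q y else 0 with hpdef
  have hpc : ∀ x, (∑ y, if C x y then 0 else q y) = 1 - p x := fun x => by
    rw [eq_sub_iff_add_eq, ← hq1, ← Finset.sum_add_distrib]
    refine Finset.sum_congr rfl fun y _ => ?_
    split_ifs <;> simp
  induction N with
  | zero =>
    intro w hw
    refine ⟨L, hL, Finset.sum_le_sum fun x _ => mul_le_mul_of_nonneg_left ?_ (hw x)⟩
    have h1 : (firstHit (C x) L : ℝ) ≤ L.length := by exact_mod_cast firstHit_le_length (hL x)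
    have h2 : 0 ≤ 1 / p x := one_div_nonneg.2 (hp x).le
    rw [pow_zero, one_mul]
    linarith
  | succ N ih =>
    intro w hw
    set B : α → ℝ := fun x => 1 / p x + (1 - p x) ^ N * L.length with hB
    obtain ⟨y, hy⟩ := exists_le_of_sum_mul_le hq hq1
      (F := fun y => ∑ x, (w x + (if C x y then 0 else w x) * B x))
      (r := ∑ x, w x * (1 / p x + (1 - p x) ^ (N + 1) * L.length)) (by
        simp_rw [Finset.mul_sum]
        rw [Finset.sum_comm]
        refine Finset.sum_le_sum fun x _ => le_of_eq ?_
        have : ∀ y, q y * (w x + (if C x y then 0 else w x) * B x) =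
            q y * w x + (if C x y then 0 else q y) * (w x * B x) := fun y => by
          split_ifs <;> ring
        simp_rw [this]
        rw [Finset.sum_add_distrib, ← Finset.sum_mul, ← Finset.sum_mul, hq1, hpc]
        have e : p x * (1 / p x) = 1 := mul_one_div_cancel (hp x).ne'
        simp only [hB, pow_succ]
        linear_combination -w x * e)
    obtain ⟨S, hS, hle⟩ := ih (fun x => if C x y then 0 else w x) fun x => by
      split_ifs
      exacts [le_rfl, hw x]
    refine ⟨y :: S, fun x => ?_, le_trans ?_ hy⟩
    · obtain ⟨y', hy', h⟩ := hS x
      exact ⟨y', List.mem_cons_of_mem _ hy', h⟩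
    · rw [Finset.sum_add_distrib]
      refine le_trans ?_ (add_le_add_right hle _)
      rw [← Finset.sum_add_distrib]
      refine Finset.sum_le_sum fun x _ => ?_
      split_ifs with h
      · have : (firstHit (C x) (y :: S) : ℝ) ≤ 1 := by exact_mod_cast firstHit_cons_le_one h S
        nlinarith [hw x]
      · have : (firstHit (C x) (y :: S) : ℝ) ≤ firstHit (C x) S + 1 := by
          exact_mod_cast firstHit_cons_le (hS x) y
        nlinarith [hw x]

open Classical in
theorem exists_list_sum_mul_firstHit_le_two_div {α β : Type*} [Fintype α] [Fintype β]
    (C : α → β → Prop) {q : β → ℝ} (hq : ∀ y, 0 ≤ q y) (hq1 : ∑ y, q y = 1)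
    (hp : ∀ x, 0 < ∑ y, if C x y then q y else 0) {w : α → ℝ} (hw : ∀ x, 0 ≤ w x) :
    ∃ S : List β, (∀ x, ∃ y ∈ S, C x y) ∧ ∑ x, w x * (firstHit (C x) S : ℝ) ≤
      ∑ x, w x * (2 / ∑ y, if C x y then q y else 0) := by
  set p : α → ℝ := fun x => ∑ y, if C x y then q y else 0 with hpdef
  set L : List β := Finset.univ.toList with hLdef
  have hL : ∀ x, ∃ y ∈ L, C x y := fun x => by
    by_contra! h
    have h0 : p x = 0 := Finset.sum_eq_zero fun y _ => if_neg (h y (by simp [hLdef]))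
    exact (hp x).ne' h0
  have hp1 : ∀ x, p x ≤ 1 := fun x => by
    rw [← hq1]
    refine Finset.sum_le_sum fun y _ => ?_
    split_ifs
    exacts [le_rfl, hq y]
  have hev : ∀ x, ∀ᶠ N : ℕ in Filter.atTop, (1 - p x) ^ N * L.length ≤ 1 / p x := fun x => by
    have ht := (tendsto_pow_atTop_nhds_zero_of_lt_one (r := 1 - p x)
      (by linarith [hp1 x]) (by have := hp x; linarith)).mul_const (L.length : ℝ)
    rw [zero_mul] at ht
    exact (ht.eventually_lt_const (one_div_pos.2 (hp x))).mono fun _ h => h.le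
  obtain ⟨N, hN⟩ := (Filter.eventually_all.2 hev).exists
  obtain ⟨S, hS, hle⟩ := exists_list_sum_mul_firstHit_le C hq hq1 hp L hL N w hw
  refine ⟨S, hS, hle.trans (Finset.sum_le_sum fun x _ => mul_le_mul_of_nonneg_left ?_ (hw x))⟩
  have : (2 : ℝ) / p x = 1 / p x + 1 / p x := by ring
  rw [this]
  exact add_le_add_right (hN x) _

/-- Data processing for the binary test `B`, in the form of a change-of-measure bound. -/
theorem mul_neg_log_sum_le {β : Type*} [Fintype β] (B : Finset β) {w q : β → ℝ}
    (hw : ∀ y, 0 ≤ w y) (hq : ∀ y, 0 ≤ q y) (hw1 : ∑ y, w y = 1) (hq1 : ∑ y, q y = 1)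
    (h : ∀ y, q y = 0 → w y = 0) (hB : 0 < ∑ y ∈ B, q y) :
    (∑ y ∈ B, w y) * -Real.log (∑ y ∈ B, q y) ≤ ∑ y, w y * Real.log (w y / q y) + 1 := by
  classical
  set t := ∑ y ∈ B, q y with ht
  have h1 := Finset.sum_le_sum fun y (_ : y ∈ B) =>
    le_mul_log_div (hw y) (hq y) (h y) (inv_pos.2 hB)
  have h2 := Finset.sum_le_sum fun y (_ : y ∈ Bᶜ) =>
    le_mul_log_div (hw y) (hq y) (h y) one_pos
  rw [Finset.sum_sub_distrib, Finset.sum_add_distrib, ← Finset.sum_mul, ← Finset.sum_mul,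
    ← ht, mul_inv_cancel₀ hB.ne', Real.log_inv] at h1
  simp only [Real.log_one, mul_zero, zero_add, mul_one, Finset.sum_sub_distrib] at h2
  have e1 := Finset.sum_add_sum_compl B w
  have e2 := Finset.sum_add_sum_compl B q
  have e3 := Finset.sum_add_sum_compl B fun y => w y * Real.log (w y / q y)
  linarith

/-- Additivity of relative entropy for product distributions. -/
theorem sum_prod_mul_log_div {ι β : Type*} [Fintype ι] [DecidableEq ι] [Fintype β]
    {w q : ι → β → ℝ} (hw1 : ∀ i, ∑ b, w i b = 1) (h : ∀ i b, q i b = 0 → w i b = 0) :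
    ∑ y : ι → β, (∏ i, w i (y i)) * Real.log ((∏ i, w i (y i)) / ∏ i, q i (y i)) =
      ∑ i, ∑ b, w i b * Real.log (w i b / q i b) := by
  have key : ∀ y : ι → β,
      (∏ i, w i (y i)) * Real.log ((∏ i, w i (y i)) / ∏ i, q i (y i)) =
        ∑ i, (∏ j, w j (y j)) * Real.log (w i (y i) / q i (y i)) := fun y => by
    rw [← Finset.mul_sum]
    by_cases h0 : ∏ i, w i (y i) = 0
    · simp [h0]
    · have hwi : ∀ i ∈ Finset.univ, w i (y i) ≠ 0 := Finset.prod_ne_zero_iff.1 h0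
      rw [← Finset.prod_div_distrib, Real.log_prod fun i hi =>
        div_ne_zero (hwi i hi) fun hq => hwi i hi (h i _ hq)]
  simp_rw [key]
  rw [Finset.sum_comm]
  exact Finset.sum_congr rfl fun i _ =>
    sum_prod_mul_apply w hw1 i fun b => Real.log (w i b / q i b)

/-- Chernoff bound for a sum of independent bounded nonnegative costs. -/
theorem sum_filter_prod_le_exp {ι β : Type*} [Fintype ι] [DecidableEq ι] [Fintype β]
    {w e : ι → β → ℝ} {K s D δ : ℝ} (hw : ∀ i b, 0 ≤ w i b) (hw1 : ∀ i, ∑ b, w i b = 1)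
    (he : ∀ i b, 0 ≤ e i b) (heK : ∀ i b, e i b ≤ K) (hs : 0 ≤ s) (hsK : s * K ≤ 1)
    (hmean : ∑ i, ∑ b, w i b * e i b ≤ Fintype.card ι * (D - δ)) (B : Finset (ι → β))
    (hB : ∀ y ∈ B, Fintype.card ι * D ≤ ∑ i, e i (y i)) :
    ∑ y ∈ B, ∏ i, w i (y i) ≤ Real.exp (-(Fintype.card ι * (s * δ - (s * K) ^ 2))) := by
  have hstep : ∀ i, ∑ b, w i b * Real.exp (s * e i b) ≤
      Real.exp (s * (∑ b, w i b * e i b) + (s * K) ^ 2) := fun i => by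
    refine le_trans ?_ (Real.add_one_le_exp _)
    calc ∑ b, w i b * Real.exp (s * e i b)
        ≤ ∑ b, w i b * (1 + s * e i b + (s * K) ^ 2) := by
          refine Finset.sum_le_sum fun b _ => mul_le_mul_of_nonneg_left ?_ (hw i b)
          have h0 : 0 ≤ s * e i b := mul_nonneg hs (he i b)
          have hK : s * e i b ≤ s * K := mul_le_mul_of_nonneg_left (heK i b) hs
          have := Real.abs_exp_sub_one_sub_id_le (x := s * e i b)
            (by rw [abs_of_nonneg h0]; linarith)
          have h2 := (abs_le.1 this).2
          have h3 : (s * e i b) ^ 2 ≤ (s * K) ^ 2 := pow_le_pow_left₀ h0 hK 2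
          linarith
      _ = s * (∑ b, w i b * e i b) + (s * K) ^ 2 + 1 := by
          have : ∀ b, w i b * (1 + s * e i b + (s * K) ^ 2) =
              w i b * (1 + (s * K) ^ 2) + s * (w i b * e i b) := fun b => by ring
          simp_rw [this]
          rw [Finset.sum_add_distrib, ← Finset.sum_mul, ← Finset.mul_sum, hw1]
          ring
  calc ∑ y ∈ B, ∏ i, w i (y i)
      ≤ ∑ y ∈ B, Real.exp (-(s * (Fintype.card ι * D))) *
          ∏ i, (w i (y i) * Real.exp (s * e i (y i))) := by
        refine Finset.sum_le_sum fun y hy => ?_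
        rw [Finset.prod_mul_distrib, ← Real.exp_sum, mul_left_comm, ← Real.exp_add]
        refine le_mul_of_one_le_right (Finset.prod_nonneg fun i _ => hw i _) ?_
        rw [Real.one_le_exp_iff, ← Finset.mul_sum]
        have := mul_le_mul_of_nonneg_left (hB y hy) hs
        linarith
    _ ≤ ∑ y : ι → β, Real.exp (-(s * (Fintype.card ι * D))) *
          ∏ i, (w i (y i) * Real.exp (s * e i (y i))) :=
        Finset.sum_le_sum_of_subset_of_nonneg (Finset.subset_univ _) fun y _ _ =>
          mul_nonneg (Real.exp_nonneg _) (Finset.prod_nonneg fun i _ =>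
            mul_nonneg (hw i _) (Real.exp_nonneg _))
    _ = Real.exp (-(s * (Fintype.card ι * D))) *
          ∏ i, ∑ b, w i b * Real.exp (s * e i b) := by
        rw [← Finset.mul_sum, sum_prod_apply (fun i b => w i b * Real.exp (s * e i b))]
    _ ≤ Real.exp (-(s * (Fintype.card ι * D))) *
          ∏ i, Real.exp (s * (∑ b, w i b * e i b) + (s * K) ^ 2) := by
        refine mul_le_mul_of_nonneg_left (Finset.prod_le_prod (fun i _ => ?_)
          fun i _ => hstep i) (Real.exp_nonneg _)
        exact Finset.sum_nonneg fun b _ => mul_nonneg (hw i b) (Real.exp_nonneg _)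
    _ ≤ Real.exp (-(Fintype.card ι * (s * δ - (s * K) ^ 2))) := by
        rw [← Real.exp_sum, ← Real.exp_add, Real.exp_le_exp, Finset.sum_add_distrib,
          ← Finset.mul_sum]
        have := mul_le_mul_of_nonneg_left hmean hs
        simp only [Finset.sum_const, Finset.card_univ, nsmul_eq_mul]
        linarith

section JointType

variable {X Z : Type*} [DecidableEq X] [DecidableEq Z] {n : ℕ}

theorem jointEmpDist_apply_pos (x : Fin n → X) (z : Fin n → Z) (i : Fin n) :
    0 < jointEmpDist x z (x i) (z i) := by
  unfold jointEmpDist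
  have hn : 0 < n := i.pos
  have : 0 < (Finset.univ.filter fun j => x j = x i ∧ z j = z i).card :=
    Finset.card_pos.2 ⟨i, by simp⟩
  positivity

variable [Fintype X] [Fintype Z]

theorem sum_apply_eq_mul_sum_jointEmpDist (hn : 0 < n) (x : Fin n → X) (z : Fin n → Z)
    (g : X → Z → ℝ) :
    ∑ i, g (x i) (z i) = n * ∑ a, ∑ b, jointEmpDist x z a b * g a b := by
  have hnR : (n : ℝ) ≠ 0 := by exact_mod_cast hn.ne'
  have h : ∀ i, g (x i) (z i) =
      ∑ a, ∑ b, if x i = a ∧ z i = b then g a b else 0 := fun i => by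
    simp [ite_and]
  simp_rw [h]
  rw [Finset.sum_comm, Finset.mul_sum]
  refine Finset.sum_congr rfl fun a _ => ?_
  rw [Finset.sum_comm, Finset.mul_sum]
  refine Finset.sum_congr rfl fun b _ => ?_
  rw [← Finset.sum_filter, Finset.sum_const, nsmul_eq_mul, jointEmpDist]
  field_simp

theorem isJointProbDist_jointEmpDist (hn : 0 < n) (x : Fin n → X) (z : Fin n → Z) :
    IsJointProbDist (jointEmpDist x z) := by
  refine ⟨fun a b => by unfold jointEmpDist; positivity, ?_⟩
  have h := sum_apply_eq_mul_sum_jointEmpDist hn x z fun _ _ => 1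
  have hnR : (n : ℝ) ≠ 0 := by exact_mod_cast hn.ne'
  simp only [Finset.sum_const, Finset.card_univ, Fintype.card_fin, nsmul_eq_mul, mul_one] at h
  exact mul_left_cancel₀ hnR (by rw [← h, mul_one])

/-- The probability of a sequence pair in terms of its joint type. -/
theorem prod_eq_prod_jointEmpDist_mul_exp (hn : 0 < n) {P : X → Z → ℝ} (hP : ∀ a b, 0 < P a b)
    (x : Fin n → X) (z : Fin n → Z) :
    ∏ i, P (x i) (z i) = (∏ i, jointEmpDist x z (x i) (z i)) *
      Real.exp (-(n * klDiv2 (jointEmpDist x z) P)) := by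
  have hQ := jointEmpDist_apply_pos x z
  rw [klDiv2, ← sum_apply_eq_mul_sum_jointEmpDist hn x z
    fun a b => Real.log (jointEmpDist x z a b / P a b), ← Finset.sum_neg_distrib, Real.exp_sum,
    ← Finset.prod_mul_distrib]
  refine Finset.prod_congr rfl fun i _ => ?_
  rw [← Real.log_inv, Real.exp_log (inv_pos.2 (div_pos (hQ i) (hP _ _))), inv_div,
    mul_div_cancel₀ _ (hQ i).ne']

open Classical in
/-- There are at most polynomially many joint types. -/
theorem card_image_jointEmpDist_le (X Z : Type*) [Fintype X] [Fintype Z] (n : ℕ) :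
    (Finset.univ.image fun s : (Fin n → X) × (Fin n → Z) => jointEmpDist s.1 s.2).card ≤
      (n + 1) ^ (Fintype.card Z * Fintype.card X) := by
  have hsub : (Finset.univ.image fun s : (Fin n → X) × (Fin n → Z) => jointEmpDist s.1 s.2) ⊆
      Finset.univ.image fun (k : X → Z → Fin (n + 1)) a b => ((k a b : ℕ) : ℝ) / n := by
    intro Q hQ
    obtain ⟨s, -, rfl⟩ := Finset.mem_image.1 hQ
    refine Finset.mem_image.2 ⟨fun a b =>
      ⟨(Finset.univ.filter fun i => s.1 i = a ∧ s.2 i = b).card, Nat.lt_succ_of_le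
        ((Finset.card_le_univ _).trans_eq (Fintype.card_fin n))⟩, Finset.mem_univ _, ?_⟩
    rfl
  refine (Finset.card_le_card hsub).trans (Finset.card_image_le.trans_eq ?_)
  simp [pow_mul]

end JointType

theorem meanDist_le_iff {X Y : Type*} {d : X → Y → ℝ} {D : ℝ} {n : ℕ} (hn : 0 < n)
    {x : Fin n → X} {y : Fin n → Y} : meanDist d x y ≤ D ↔ ∑ i, d (x i) (y i) ≤ n * D := by
  have hnR : (0 : ℝ) < n := by exact_mod_cast hn
  rw [meanDist, one_div, inv_mul_le_iff₀ hnR]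

section Achievability

variable {X Z Y : Type*} {d : X → Y → ℝ} {D : ℝ}

open Classical in
/-- The noiseless channel sending `x` to `r x`. -/
noncomputable def detChannel (Z : Type*) (r : X → Y) : X → Z → Y → ℝ :=
  fun a _ y => if y = r a then 1 else 0

theorem detChannel_nonneg (r : X → Y) (a : X) (b : Z) (y : Y) : 0 ≤ detChannel Z r a b y := by
  unfold detChannel
  split_ifs <;> norm_num

variable [Fintype Y]

theorem sum_detChannel_mul (r : X → Y) (a : X) (b : Z) (g : Y → ℝ) :
    ∑ y, detChannel Z r a b y * g y = g (r a) := by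
  classical
  simp [detChannel]

theorem sum_detChannel (r : X → Y) (a : X) (b : Z) : ∑ y, detChannel Z r a b y = 1 := by
  simpa using sum_detChannel_mul r a b fun _ => 1

variable [Fintype X] [Fintype Z]

/-- The conditional rate-distortion function is approached by feasible channels. -/
theorem exists_channel_condMutualInfo_lt (hzero : ∀ x, ∃ y, d x y = 0) (hD : 0 ≤ D)
    (Q : X → Z → ℝ) {ε : ℝ} (hε : 0 < ε) :
    ∃ W : X → Z → Y → ℝ, (∀ a b y, 0 ≤ W a b y) ∧ (∀ a b, ∑ y, W a b y = 1) ∧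
      ∑ a, ∑ b, ∑ y, Q a b * W a b y * d a y ≤ D ∧
        condMutualInfo Q W < condRateDistortion d D Q + ε := by
  choose r hr using hzero
  have hne : {i | ∃ W : X → Z → Y → ℝ, (∀ a b y, 0 ≤ W a b y) ∧ (∀ a b, ∑ y, W a b y = 1) ∧
      (∑ a, ∑ b, ∑ y, Q a b * W a b y * d a y) ≤ D ∧ i = condMutualInfo Q W}.Nonempty :=
    ⟨_, detChannel Z r, detChannel_nonneg r, sum_detChannel r, by
      simp_rw [mul_assoc, ← Finset.mul_sum, sum_detChannel_mul, hr]
      simpa using hD, rfl⟩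
  obtain ⟨_, ⟨W, h0, h1, h2, rfl⟩, hlt⟩ := exists_lt_of_csInf_lt hne
    (lt_add_of_pos_right (condRateDistortion d D Q) hε)
  exact ⟨W, h0, h1, h2, hlt⟩

theorem prod_channel_sum_ball_eq_one {Q : X → Z → ℝ} (hd : ∀ x y, 0 ≤ d x y)
    (hQ : ∀ a b, 0 ≤ Q a b) {W : X → Z → Y → ℝ} (hW : ∀ a b y, 0 ≤ W a b y)
    (hW1 : ∀ a b, ∑ y, W a b y = 1) (hWd : ∑ a, ∑ b, ∑ y, Q a b * W a b y * d a y ≤ 0)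
    {n : ℕ} (hn : 0 < n) {x : Fin n → X} {z : Fin n → Z} (hxz : ∀ i, 0 < Q (x i) (z i))
    {B : Finset (Fin n → Y)} (hB : ∀ y, meanDist d x y ≤ 0 → y ∈ B) :
    ∑ y ∈ B, ∏ i, W (x i) (z i) (y i) = 1 := by
  have hterm : ∀ a b y, 0 ≤ Q a b * W a b y * d a y := fun a b y =>
    mul_nonneg (mul_nonneg (hQ a b) (hW a b y)) (hd a y)
  have hzero : ∀ a b y, Q a b * W a b y * d a y = 0 := fun a b y => by
    refine le_antisymm (le_trans ?_ hWd) (hterm a b y)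
    calc Q a b * W a b y * d a y ≤ ∑ y, Q a b * W a b y * d a y :=
          Finset.single_le_sum (f := fun y => Q a b * W a b y * d a y)
            (fun y _ => hterm a b y) (Finset.mem_univ y)
      _ ≤ ∑ b, ∑ y, Q a b * W a b y * d a y :=
          Finset.single_le_sum (f := fun b => ∑ y, Q a b * W a b y * d a y)
            (fun b _ => Finset.sum_nonneg fun y _ => hterm a b y) (Finset.mem_univ b)
      _ ≤ _ := Finset.single_le_sum (f := fun a => ∑ b, ∑ y, Q a b * W a b y * d a y)
            (fun a _ => Finset.sum_nonneg fun b _ => Finset.sum_nonneg fun y _ => hterm a b y)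
            (Finset.mem_univ a)
  rw [Finset.sum_subset (Finset.subset_univ B)]
  · rw [sum_prod_apply (fun i b => W (x i) (z i) b)]
    simp [hW1]
  · intro y _ hy
    by_contra h
    refine hy (hB y ((meanDist_le_iff hn).2 (le_of_eq ?_)))
    rw [mul_zero]
    refine Finset.sum_eq_zero fun i hi => ?_
    exact (mul_eq_zero.1 (hzero (x i) (z i) (y i))).resolve_left
      (mul_ne_zero (hxz i).ne' (Finset.prod_ne_zero_iff.1 h i hi))

variable [Nonempty X] [Nonempty Y]

open Classical in
/-- Near-optimal test channels, together with output laws, whose `n`-fold products meet the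
distortion constraint with probability close to one, uniformly over all joint types. -/
theorem exists_channel_sum_ball_ge (hd : ∀ x y, 0 ≤ d x y) (hzero : ∀ x, ∃ y, d x y = 0)
    (hD : 0 ≤ D) {ε η : ℝ} (hε : 0 < ε) (hη : 0 < η) :
    ∃ N : ℕ, ∀ Q : X → Z → ℝ, IsJointProbDist Q →
      ∃ (W : X → Z → Y → ℝ) (q : Z → Y → ℝ), (∀ a b y, 0 ≤ W a b y) ∧
        (∀ a b, ∑ y, W a b y = 1) ∧ (∀ b y, 0 ≤ q b y) ∧ (∀ b, ∑ y, q b y = 1) ∧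
        (∀ a b y, Q a b ≠ 0 → q b y = 0 → W a b y = 0) ∧
        ∑ a, ∑ b, Q a b * ∑ y, W a b y * Real.log (W a b y / q b y) ≤
          condRateDistortion d D Q + ε ∧
        ∀ n, N ≤ n → 0 < n → ∀ (x : Fin n → X) (z : Fin n → Z), jointEmpDist x z = Q →
          1 - η ≤ ∑ y with meanDist d x y ≤ D, ∏ i, W (x i) (z i) (y i) := by
  rcases hD.eq_or_lt with rfl | hDpos
  · refine ⟨0, fun Q hQ => ?_⟩
    obtain ⟨W, hW, hW1, hWd, hI⟩ := exists_channel_condMutualInfo_lt hzero le_rfl Q hε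
    refine ⟨W, outputLaw Q W, hW, hW1, outputLaw_nonneg hQ.1 hW, sum_outputLaw hW1,
      fun a b y h => eq_zero_of_outputLaw_eq_zero hQ.1 hW h, ?_, fun n _ hn x z hxz => ?_⟩
    · rw [← condMutualInfo_eq_outputLaw hQ.1]
      exact hI.le
    · rw [prod_channel_sum_ball_eq_one hd hQ.1 hW hW1 hWd hn
        (fun i => hxz ▸ jointEmpDist_apply_pos x z i) fun y hy => by simpa using hy]
      linarith
  choose r hr using hzero
  have hlog : 0 ≤ Real.log (Fintype.card Y) := Real.log_natCast_nonneg _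
  set θ : ℝ := ε / (2 * (Real.log (Fintype.card Y) + ε)) with hθ
  have hθ0 : 0 < θ := by positivity
  have hθ1 : θ < 1 := by
    rw [hθ, div_lt_one (by positivity)]
    linarith
  have hθlog : θ * Real.log (Fintype.card Y) ≤ ε / 2 := by
    rw [hθ, div_mul_eq_mul_div, div_le_div_iff₀ (by positivity) two_pos]
    nlinarith
  set δ := θ * D with hδ
  have hδ0 : 0 < δ := by positivity
  set K := ∑ a, ∑ y, d a y + δ with hK
  have hKδ : δ ≤ K := le_add_of_nonneg_left
    (Finset.sum_nonneg fun a _ => Finset.sum_nonneg fun y _ => hd a y)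
  have hK0 : 0 < K := hδ0.trans_le hKδ
  have hdK : ∀ a y, d a y ≤ K := fun a y => by
    refine le_trans ?_ (le_add_of_nonneg_right hδ0.le)
    exact (Finset.single_le_sum (f := fun y => d a y) (fun y _ => hd a y)
      (Finset.mem_univ y)).trans (Finset.single_le_sum (f := fun a => ∑ y, d a y)
        (fun a _ => Finset.sum_nonneg fun y _ => hd a y) (Finset.mem_univ a))
  set s := δ / (2 * K ^ 2) with hs
  have hs0 : 0 < s := by positivity
  have hsK : s * K = δ / (2 * K) := by
    rw [hs]
    field_simp
  set κ := s * δ - (s * K) ^ 2 with hκ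
  have hκ0 : 0 < κ := by
    have : κ = δ ^ 2 / (4 * K ^ 2) := by
      rw [hκ, hsK, hs]
      field_simp
      norm_num
    rw [this]
    positivity
  have hlim : Filter.Tendsto (fun n : ℕ => Real.exp (-(n * κ))) Filter.atTop (nhds 0) :=
    Real.tendsto_exp_neg_atTop_nhds_zero.comp
      (tendsto_natCast_atTop_atTop.atTop_mul_const hκ0)
  obtain ⟨N, hN⟩ := Filter.eventually_atTop.1 (hlim.eventually_lt_const hη)
  refine ⟨N, fun Q hQ => ?_⟩
  obtain ⟨V, hV, hV1, hVd, hI⟩ :=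
    exists_channel_condMutualInfo_lt (fun x => ⟨r x, hr x⟩) hD Q (half_pos hε)
  set u : ℝ := 1 / (Fintype.card Y : ℝ) with hu
  have hu0 : 0 < u := by positivity
  set W : X → Z → Y → ℝ := fun a b y => (1 - θ) * V a b y + θ * detChannel Z r a b y with hW
  set q : Z → Y → ℝ := fun b y => (1 - θ) * outputLaw Q V b y + θ * u with hq
  have h1θ : 0 < 1 - θ := by linarith
  have hout := outputLaw_nonneg hQ.1 hV
  have hW0 : ∀ a b y, 0 ≤ W a b y := fun a b y =>
    add_nonneg (mul_nonneg h1θ.le (hV a b y)) (mul_nonneg hθ0.le (detChannel_nonneg r a b y))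
  have hW1 : ∀ a b, ∑ y, W a b y = 1 := fun a b => by
    simp only [hW]
    rw [Finset.sum_add_distrib, ← Finset.mul_sum, ← Finset.mul_sum, hV1, sum_detChannel]
    ring
  have hq0 : ∀ b y, 0 < q b y := fun b y =>
    add_pos_of_nonneg_of_pos (mul_nonneg h1θ.le (hout b y)) (mul_pos hθ0 hu0)
  refine ⟨W, q, hW0, hW1, fun b y => (hq0 b y).le, fun b => ?_,
    fun a b y _ h => absurd h (hq0 b y).ne', ?_, fun n hNn hn x z hxz => ?_⟩
  · simp only [hq]
    rw [Finset.sum_add_distrib, ← Finset.mul_sum, sum_outputLaw hV1, Finset.sum_const,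
      Finset.card_univ, nsmul_eq_mul, hu]
    field_simp
    ring
  · have hdet : ∀ a b, ∑ y, detChannel Z r a b y * Real.log (detChannel Z r a b y / u) =
        Real.log (Fintype.card Y) := fun a b => by
      rw [sum_detChannel_mul]
      simp [detChannel, hu]
    have hab : ∀ a b, Q a b * ∑ y, W a b y * Real.log (W a b y / q b y) ≤
        (1 - θ) * (Q a b * ∑ y, V a b y * Real.log (V a b y / outputLaw Q V b y)) +
          Q a b * (θ * Real.log (Fintype.card Y)) := fun a b => by
      by_cases h : Q a b = 0
      · simp [h]
      rw [mul_left_comm, ← mul_add, ← hdet a b]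
      refine mul_le_mul_of_nonneg_left ?_ (hQ.1 a b)
      rw [Finset.mul_sum, Finset.mul_sum, ← Finset.sum_add_distrib]
      refine Finset.sum_le_sum fun y _ => ?_
      have := add_mul_log_div_add_le (mul_nonneg h1θ.le (hV a b y))
        (mul_nonneg hθ0.le (detChannel_nonneg r a b y)) (mul_nonneg h1θ.le (hout b y))
        (mul_pos hθ0 hu0).le
        (fun h0 => by
          rw [eq_zero_of_outputLaw_eq_zero hQ.1 hV h
            ((mul_eq_zero.1 h0).resolve_left h1θ.ne'), mul_zero])
        (fun h0 => absurd h0 (mul_pos hθ0 hu0).ne')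
      rwa [mul_div_mul_left _ _ h1θ.ne', mul_div_mul_left _ _ hθ0.ne', mul_assoc (1 - θ),
        mul_assoc θ] at this
    calc ∑ a, ∑ b, Q a b * ∑ y, W a b y * Real.log (W a b y / q b y)
        ≤ ∑ a, ∑ b, ((1 - θ) *
            (Q a b * ∑ y, V a b y * Real.log (V a b y / outputLaw Q V b y)) +
              Q a b * (θ * Real.log (Fintype.card Y))) :=
          Finset.sum_le_sum fun a _ => Finset.sum_le_sum fun b _ => hab a b
      _ = (1 - θ) * condMutualInfo Q V + θ * Real.log (Fintype.card Y) := by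
          simp_rw [Finset.sum_add_distrib, ← Finset.mul_sum, ← Finset.sum_mul, hQ.2,
            condMutualInfo_eq_outputLaw hQ.1]
          ring
      _ ≤ condRateDistortion d D Q + ε := by
          have := condMutualInfo_nonneg hQ.1 hV hV1
          nlinarith
  · have hmean : ∑ i, ∑ y, W (x i) (z i) y * d (x i) y ≤
        Fintype.card (Fin n) * (D - δ) := by
      rw [sum_apply_eq_mul_sum_jointEmpDist hn x z fun a b => ∑ y, W a b y * d a y, hxz,
        Fintype.card_fin]
      refine mul_le_mul_of_nonneg_left ?_ (Nat.cast_nonneg n)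
      have : ∀ a b, Q a b * ∑ y, W a b y * d a y =
          (1 - θ) * ∑ y, Q a b * V a b y * d a y := fun a b => by
        simp only [hW, add_mul, Finset.sum_add_distrib, mul_assoc, ← Finset.mul_sum,
          sum_detChannel_mul, hr]
        ring
      simp_rw [this, ← Finset.mul_sum]
      have := mul_le_mul_of_nonneg_left hVd h1θ.le
      rw [hδ]
      linarith
    have hch := sum_filter_prod_le_exp (w := fun i y => W (x i) (z i) y)
      (e := fun i y => d (x i) y) (K := K) (s := s) (D := D) (δ := δ)
      (fun i y => hW0 _ _ y) (fun i => hW1 _ _) (fun i y => hd _ y) (fun i y => hdK _ y) hs0.le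
      (by rw [hsK, div_le_one (by positivity)]; linarith) hmean
      (Finset.univ.filter fun y : Fin n → Y => ¬ meanDist d x y ≤ D) (fun y hy => by
        have := (Finset.mem_filter.1 hy).2
        rw [meanDist_le_iff hn, not_le] at this
        rw [Fintype.card_fin]
        exact this.le)
    rw [Fintype.card_fin] at hch
    have htot : ∑ y : Fin n → Y, ∏ i, W (x i) (z i) (y i) = 1 := by
      rw [sum_prod_apply (fun i b => W (x i) (z i) b)]
      simp [hW1]
    have hsplit := Finset.sum_filter_add_sum_filter_not Finset.univ
      (fun y : Fin n → Y => meanDist d x y ≤ D) fun y => ∏ i, W (x i) (z i) (y i)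
    have := hN n hNn
    linarith

open Classical in
/-- Product output laws give distortion balls mass at least `exp (-n (R(D,Q) + ε))`. -/
theorem exists_outputLaw_neg_log_ball_le (hd : ∀ x y, 0 ≤ d x y)
    (hzero : ∀ x, ∃ y, d x y = 0) (hD : 0 ≤ D) {C : ℝ}
    (hC : ∀ Q : X → Z → ℝ, IsJointProbDist Q → condRateDistortion d D Q ≤ C)
    {ε : ℝ} (hε : 0 < ε) :
    ∃ N : ℕ, ∀ Q : X → Z → ℝ, IsJointProbDist Q →
      ∃ q : Z → Y → ℝ, (∀ b y, 0 ≤ q b y) ∧ (∀ b, ∑ y, q b y = 1) ∧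
        ∀ n, N ≤ n → 0 < n → ∀ (x : Fin n → X) (z : Fin n → Z), jointEmpDist x z = Q →
          0 < ∑ y with meanDist d x y ≤ D, ∏ i, q (z i) (y i) ∧
          -Real.log (∑ y with meanDist d x y ≤ D, ∏ i, q (z i) (y i)) ≤
            n * (condRateDistortion d D Q + ε) := by
  set η := ε / (4 * (|C| + ε)) with hη
  have hη0 : 0 < η := by positivity
  have hη1 : η < 1 := by
    rw [hη, div_lt_one (by positivity)]
    linarith [abs_nonneg C]
  have hηC : η * (|C| + ε) = ε / 4 := by
    rw [hη]
    field_simp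
  obtain ⟨N, hN⟩ := exists_channel_sum_ball_ge (Z := Z) hd hzero hD
    (show 0 < ε / 4 by positivity) hη0
  refine ⟨max N ⌈4 / ε⌉₊, fun Q hQ => ?_⟩
  obtain ⟨W, q, hW, hW1, hq, hq1, hac, hJ, hball⟩ := hN Q hQ
  refine ⟨q, hq, hq1, fun n hn hn0 x z hxz => ?_⟩
  have hB := hball n ((le_max_left _ _).trans hn) hn0 x z hxz
  set B : Finset (Fin n → Y) := Finset.univ.filter fun y => meanDist d x y ≤ D with hBdef
  have hac' : ∀ i y, q (z i) y = 0 → W (x i) (z i) y = 0 := fun i y =>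
    hac _ _ _ (by rw [← hxz]; exact (jointEmpDist_apply_pos x z i).ne')
  have hacp : ∀ y : Fin n → Y, ∏ i, q (z i) (y i) = 0 → ∏ i, W (x i) (z i) (y i) = 0 :=
    fun y h => by
      obtain ⟨i, hi, h0⟩ := Finset.prod_eq_zero_iff.1 h
      exact Finset.prod_eq_zero hi (hac' i _ h0)
  have hqp : ∀ y : Fin n → Y, 0 ≤ ∏ i, q (z i) (y i) := fun y =>
    Finset.prod_nonneg fun i _ => hq _ _
  have hpos : 0 < ∑ y ∈ B, ∏ i, q (z i) (y i) := by
    refine (Finset.sum_nonneg fun y _ => hqp y).lt_of_ne fun h0 => ?_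
    rw [eq_comm, Finset.sum_eq_zero_iff_of_nonneg fun y _ => hqp y] at h0
    rw [Finset.sum_eq_zero fun y hy => hacp y (h0 y hy)] at hB
    linarith
  refine ⟨hpos, ?_⟩
  have htotW : ∑ y : Fin n → Y, ∏ i, W (x i) (z i) (y i) = 1 := by
    rw [sum_prod_apply (fun i b => W (x i) (z i) b)]
    simp [hW1]
  have htotq : ∑ y : Fin n → Y, ∏ i, q (z i) (y i) = 1 := by
    rw [sum_prod_apply (fun i b => q (z i) b)]
    simp [hq1]
  have hdpi := mul_neg_log_sum_le B (w := fun y : Fin n → Y => ∏ i, W (x i) (z i) (y i))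
    (fun y => Finset.prod_nonneg fun i _ => hW _ _ _) hqp htotW htotq hacp hpos
  rw [sum_prod_mul_log_div (w := fun i y => W (x i) (z i) y) (q := fun i y => q (z i) y)
    (fun i => hW1 _ _) hac', sum_apply_eq_mul_sum_jointEmpDist hn0 x z
      fun a b => ∑ y, W a b y * Real.log (W a b y / q b y), hxz] at hdpi
  set L := -Real.log (∑ y ∈ B, ∏ i, q (z i) (y i)) with hL
  have hL0 : 0 ≤ L := by
    rw [hL, neg_nonneg]
    refine Real.log_nonpos hpos.le ?_
    rw [← htotq]
    exact Finset.sum_le_sum_of_subset_of_nonneg (Finset.subset_univ _) fun y _ _ => hqp y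
  have h1 : (1 - η) * L ≤ n * (condRateDistortion d D Q + ε / 4) + 1 :=
    (mul_le_mul_of_nonneg_right hB hL0).trans (hdpi.trans (by gcongr))
  have hnε : 1 ≤ n * (ε / 4) := by
    have : (4 / ε : ℝ) ≤ n := (Nat.le_ceil _).trans
      (by exact_mod_cast (le_max_right _ _).trans hn)
    rw [div_le_iff₀ hε] at this
    linarith
  have hnR : (0 : ℝ) ≤ n := Nat.cast_nonneg n
  have h2 : n * (η * (condRateDistortion d D Q + ε)) ≤ n * (ε / 4) := by
    refine mul_le_mul_of_nonneg_left ?_ hnR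
    rw [← hηC]
    exact mul_le_mul_of_nonneg_left
      (by linarith [hC Q hQ, le_abs_self C]) hη0.le
  refine le_of_mul_le_mul_left (h1.trans ?_) (show 0 < 1 - η by linarith)
  have : 0 ≤ n * ε := by positivity
  linarith

end Achievability

theorem klDiv2_le_sum_neg_log {X Z : Type*} [Fintype X] [Fintype Z] {P Q : X → Z → ℝ}
    (hP : IsJointProbDist P) (hfull : ∀ a b, 0 < P a b) (hQ : IsJointProbDist Q) :
    klDiv2 Q P ≤ ∑ a, ∑ b, -Real.log (P a b) := by
  have hle : ∀ {R : X → Z → ℝ}, IsJointProbDist R → ∀ a b, R a b ≤ 1 := fun {R} hR a b => by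
    rw [← hR.2]
    exact (Finset.single_le_sum (f := fun b => R a b) (fun b _ => hR.1 a b)
      (Finset.mem_univ b)).trans (Finset.single_le_sum (f := fun a => ∑ b, R a b)
        (fun a _ => Finset.sum_nonneg fun b _ => hR.1 a b) (Finset.mem_univ a))
  refine Finset.sum_le_sum fun a _ => Finset.sum_le_sum fun b _ => ?_
  have hlogP : Real.log (P a b) ≤ 0 := Real.log_nonpos (hfull a b).le (hle hP a b)
  rcases (hQ.1 a b).eq_or_lt with h | h
  · rw [← h, zero_mul]
    linarith
  · have hlogQ : Real.log (Q a b) ≤ 0 := Real.log_nonpos h.le (hle hQ a b)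
    rw [Real.log_div h.ne' (hfull a b).ne']
    nlinarith [hle hQ a b]

theorem exists_mem_univ_toList_meanDist_le {X Y : Type*} [Fintype Y] {d : X → Y → ℝ} {D : ℝ}
    (hzero : ∀ x, ∃ y, d x y = 0) (hD : 0 ≤ D) {n : ℕ} (x : Fin n → X) :
    ∃ y ∈ (Finset.univ : Finset (Fin n → Y)).toList, meanDist d x y ≤ D := by
  choose r hr using hzero
  exact ⟨fun i => r (x i), by simp, by simpa [meanDist, hr] using hD⟩

/-- Achievability: strategies whose expected number of guesses has exponent at most `V + ε`,
where `V` bounds `R(D,Q) - D(Q‖P)` over all `Q`. -/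
theorem exists_strategy_sum_countG_le {X Z Y : Type*} [Fintype X] [Fintype Z] [Fintype Y]
    [Nonempty X] [Nonempty Z] [Nonempty Y] {d : X → Y → ℝ} (hd : ∀ x y, 0 ≤ d x y)
    (hzero : ∀ x, ∃ y, d x y = 0) {D : ℝ} (hD : 0 ≤ D) {P : X → Z → ℝ}
    (hP : IsJointProbDist P) (hfull : ∀ a b, 0 < P a b) {V : ℝ}
    (hV : ∀ Q : X → Z → ℝ, IsJointProbDist Q → condRateDistortion d D Q - klDiv2 Q P ≤ V)
    {ε : ℝ} (hε : 0 < ε) :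
    ∃ N : ℕ, ∀ n, N ≤ n → 0 < n → ∃ St : (Fin n → Z) → List (Fin n → Y),
      (∀ (z : Fin n → Z) (x : Fin n → X), ∃ y ∈ St z, meanDist d x y ≤ D) ∧
      ∑ x : Fin n → X, ∑ z : Fin n → Z, (∏ i, P (x i) (z i)) * (countG d D (St z) x : ℝ) ≤
        2 * (((n : ℝ) + 1) ^ (Fintype.card Z * Fintype.card X)) ^ 2 *
          Real.exp (n * (V + ε)) := by
  classical
  obtain ⟨N, hN⟩ := exists_outputLaw_neg_log_ball_le (Z := Z) hd hzero hD
    (C := V + ∑ a, ∑ b, -Real.log (P a b))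
    (fun Q hQ => by linarith [hV Q hQ, klDiv2_le_sum_neg_log hP hfull hQ]) hε
  choose! q hq hq1 hball using hN
  refine ⟨N, fun n hNn hn => ?_⟩
  set T : Finset (X → Z → ℝ) :=
    Finset.univ.image fun s : (Fin n → X) × (Fin n → Z) => jointEmpDist s.1 s.2 with hT
  have hTmem : ∀ x z, jointEmpDist x z ∈ T := fun x z =>
    Finset.mem_image.2 ⟨(x, z), Finset.mem_univ _, rfl⟩
  have hTprob : ∀ Q ∈ T, IsJointProbDist Q := fun Q hQ => by
    obtain ⟨s, -, rfl⟩ := Finset.mem_image.1 hQ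
    exact isJointProbDist_jointEmpDist hn _ _
  have hTpos : (0 : ℝ) < T.card := by
    exact_mod_cast Finset.card_pos.2
      ⟨_, hTmem (fun _ => Classical.arbitrary X) fun _ => Classical.arbitrary Z⟩
  have hTcard : (T.card : ℝ) ≤ ((n : ℝ) + 1) ^ (Fintype.card Z * Fintype.card X) := by
    exact_mod_cast card_image_jointEmpDist_le X Z n
  set μ : (Fin n → Z) → (Fin n → Y) → ℝ := fun z y =>
    (∑ Q ∈ T, ∏ i, q Q (z i) (y i)) / T.card with hμ
  have hμ0 : ∀ z y, 0 ≤ μ z y := fun z y => div_nonneg (Finset.sum_nonneg fun Q hQ =>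
    Finset.prod_nonneg fun i _ => hq Q (hTprob Q hQ) _ _) hTpos.le
  have hμ1 : ∀ z, ∑ y, μ z y = 1 := fun z => by
    simp only [hμ]
    rw [← Finset.sum_div, Finset.sum_comm, div_eq_one_iff_eq hTpos.ne']
    rw [Finset.sum_congr rfl fun Q hQ => (show ∑ y : Fin n → Y, ∏ i, q Q (z i) (y i) = 1 by
      rw [sum_prod_apply (fun i b => q Q (z i) b)]
      simp [hq1 Q (hTprob Q hQ)])]
    simp
  have hp : ∀ x z, Real.exp (-(n * (condRateDistortion d D (jointEmpDist x z) + ε))) / T.card ≤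
      ∑ y, if meanDist d x y ≤ D then μ z y else 0 := fun x z => by
    obtain ⟨hpos, hlog⟩ := hball _ (hTprob _ (hTmem x z)) n hNn hn x z rfl
    rw [← Finset.sum_filter]
    simp only [hμ]
    rw [← Finset.sum_div]
    refine div_le_div_of_nonneg_right ?_ hTpos.le
    calc Real.exp (-(n * (condRateDistortion d D (jointEmpDist x z) + ε)))
        ≤ Real.exp (Real.log (∑ y with meanDist d x y ≤ D,
            ∏ i, q (jointEmpDist x z) (z i) (y i))) := by
          rw [Real.exp_le_exp]
          linarith
      _ = ∑ y with meanDist d x y ≤ D, ∏ i, q (jointEmpDist x z) (z i) (y i) :=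
          Real.exp_log hpos
      _ ≤ _ := Finset.sum_le_sum fun y _ => Finset.single_le_sum
          (f := fun Q => ∏ i, q Q (z i) (y i))
          (fun Q hQ => Finset.prod_nonneg fun i _ => hq Q (hTprob Q hQ) _ _) (hTmem x z)
  have hPn : ∀ (x : Fin n → X) (z : Fin n → Z), 0 ≤ ∏ i, P (x i) (z i) := fun x z =>
    Finset.prod_nonneg fun i _ => (hfull _ _).le
  have hex := fun z : Fin n → Z => exists_list_sum_mul_firstHit_le_two_div
    (fun (x : Fin n → X) (y : Fin n → Y) => meanDist d x y ≤ D) (hμ0 z) (hμ1 z)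
    (fun x => (div_pos (Real.exp_pos _) hTpos).trans_le (hp x z))
    (w := fun x => ∏ i, P (x i) (z i)) fun x => hPn x z
  choose St hSt hle using hex
  refine ⟨St, hSt, ?_⟩
  have hterm : ∀ x z, (∏ i, P (x i) (z i)) *
      (2 / ∑ y, if meanDist d x y ≤ D then μ z y else 0) ≤
        2 * T.card * Real.exp (n * (V + ε)) * ∏ i, jointEmpDist x z (x i) (z i) := fun x z => by
    have h1 : 2 / (∑ y, if meanDist d x y ≤ D then μ z y else 0) ≤
        2 * T.card * Real.exp (n * (condRateDistortion d D (jointEmpDist x z) + ε)) := by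
      refine (div_le_div_of_nonneg_left two_pos.le (div_pos (Real.exp_pos _) hTpos)
        (hp x z)).trans_eq ?_
      rw [Real.exp_neg]
      field_simp
    have hQ0 : 0 ≤ ∏ i, jointEmpDist x z (x i) (z i) :=
      Finset.prod_nonneg fun i _ => (jointEmpDist_apply_pos x z i).le
    calc _ ≤ (∏ i, P (x i) (z i)) *
          (2 * T.card * Real.exp (n * (condRateDistortion d D (jointEmpDist x z) + ε))) :=
          mul_le_mul_of_nonneg_left h1 (hPn x z)
      _ = 2 * T.card * Real.exp (n * (condRateDistortion d D (jointEmpDist x z) -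
            klDiv2 (jointEmpDist x z) P + ε)) * ∏ i, jointEmpDist x z (x i) (z i) := by
          rw [prod_eq_prod_jointEmpDist_mul_exp hn hfull x z,
            show (n : ℝ) * (condRateDistortion d D (jointEmpDist x z) -
              klDiv2 (jointEmpDist x z) P + ε) =
              n * (condRateDistortion d D (jointEmpDist x z) + ε) +
                -(n * klDiv2 (jointEmpDist x z) P) by ring, Real.exp_add]
          ring
      _ ≤ _ := by
          have := hV _ (hTprob _ (hTmem x z))
          gcongr
  have htypes : ∑ z : Fin n → Z, ∑ x : Fin n → X, ∏ i, jointEmpDist x z (x i) (z i) ≤ T.card := by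
    calc _ ≤ ∑ z : Fin n → Z, ∑ x : Fin n → X, ∑ Q ∈ T, ∏ i, Q (x i) (z i) :=
          Finset.sum_le_sum fun z _ => Finset.sum_le_sum fun x _ =>
            Finset.single_le_sum (f := fun Q : X → Z → ℝ => ∏ i, Q (x i) (z i))
              (fun Q hQ => Finset.prod_nonneg fun i _ => (hTprob Q hQ).1 _ _) (hTmem x z)
      _ = ∑ Q ∈ T, ∑ x : Fin n → X, ∑ z : Fin n → Z, ∏ i, Q (x i) (z i) := by
          rw [Finset.sum_comm, Finset.sum_comm (s := T)]
          refine Finset.sum_congr rfl fun x _ => ?_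
          rw [Finset.sum_comm]
      _ = T.card := by
          rw [Finset.sum_congr rfl fun Q hQ => sum_sum_prod_apply (hTprob Q hQ).2]
          simp
  calc ∑ x : Fin n → X, ∑ z : Fin n → Z, (∏ i, P (x i) (z i)) * (countG d D (St z) x : ℝ)
      = ∑ z : Fin n → Z, ∑ x : Fin n → X, (∏ i, P (x i) (z i)) * (countG d D (St z) x : ℝ) :=
        Finset.sum_comm
    _ ≤ ∑ z : Fin n → Z, ∑ x : Fin n → X,
          2 * T.card * Real.exp (n * (V + ε)) * ∏ i, jointEmpDist x z (x i) (z i) :=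
        Finset.sum_le_sum fun z _ => (hle z).trans (Finset.sum_le_sum fun x _ => by
          convert hterm x z)
    _ ≤ 2 * T.card * Real.exp (n * (V + ε)) * T.card := by
        simp_rw [← Finset.mul_sum]
        exact mul_le_mul_of_nonneg_left htypes (by positivity)
    _ = 2 * (T.card : ℝ) ^ 2 * Real.exp (n * (V + ε)) := by ring
    _ ≤ _ := by gcongr

theorem tendsto_log_one_add_mul_div_atTop (K : ℝ) (hK : 0 ≤ K) :
    Filter.Tendsto (fun n : ℕ => Real.log (1 + n * K) / n) Filter.atTop (nhds 0) := by
  have hlog : Filter.Tendsto (fun n : ℕ => Real.log n / (n : ℝ)) Filter.atTop (nhds 0) :=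
    (Real.isLittleO_log_id_atTop.tendsto_div_nhds_zero).comp tendsto_natCast_atTop_atTop
  have hub : Filter.Tendsto (fun n : ℕ => Real.log (1 + K) / (n : ℝ) + Real.log n / (n : ℝ))
      Filter.atTop (nhds 0) := by
    simpa using (tendsto_const_div_atTop_nhds_zero_nat (Real.log (1 + K))).add hlog
  refine tendsto_of_tendsto_of_tendsto_of_le_of_le' tendsto_const_nhds hub
    (Filter.Eventually.of_forall fun n => div_nonneg (Real.log_nonneg ?_) n.cast_nonneg)
    ((Filter.eventually_gt_atTop 0).mono fun n hn => ?_)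
  · have : 0 ≤ n * K := by positivity
    linarith
  · have hn1 : (1 : ℝ) ≤ n := by exact_mod_cast hn
    rw [← add_div, ← Real.log_mul (by positivity) (by positivity)]
    gcongr
    linarith

theorem stmt17 {X Z Y : Type*} [Fintype X] [Fintype Z] [Fintype Y]
    [Nonempty X] [Nonempty Z] [Nonempty Y]
    (d : X → Y → ℝ) (hd : ∀ x y, 0 ≤ d x y)
    (hzero : ∀ x, ∃ y, d x y = 0)
    (D : ℝ) (hD : 0 ≤ D)
    (P : X → Z → ℝ) (hP : IsJointProbDist P) (hfull : ∀ a b, 0 < P a b) :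
    Filter.liminf
        (fun n : ℕ => (1 / (n : ℝ)) *
          sInf {r | ∃ St : (Fin n → Z) → List (Fin n → Y),
            (∀ (z : Fin n → Z) (x : Fin n → X), ∃ y ∈ St z, meanDist d x y ≤ D) ∧
            r = Real.log (∑ x : Fin n → X, ∑ z : Fin n → Z,
              (∏ i, P (x i) (z i)) * (countG d D (St z) x : ℝ))})
        Filter.atTop
      = sSup {r | ∃ Q : X → Z → ℝ, IsJointProbDist Q ∧
          r = condRateDistortion d D Q - klDiv2 Q P} := by
  set E : ℕ → Set ℝ := fun n => {r | ∃ St : (Fin n → Z) → List (Fin n → Y),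
    (∀ (z : Fin n → Z) (x : Fin n → X), ∃ y ∈ St z, meanDist d x y ≤ D) ∧
    r = Real.log (∑ x : Fin n → X, ∑ z : Fin n → Z,
      (∏ i, P (x i) (z i)) * (countG d D (St z) x : ℝ))} with hE
  set S : Set ℝ := {r | ∃ Q : X → Z → ℝ, IsJointProbDist Q ∧
    r = condRateDistortion d D Q - klDiv2 Q P} with hS
  have hSne : S.Nonempty := ⟨_, P, hP, rfl⟩
  have hEne : ∀ n, (E n).Nonempty := fun n => ⟨_, fun _ => Finset.univ.toList,
    fun _ x => exists_mem_univ_toList_meanDist_le hzero hD x, rfl⟩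
  have hlogY : 0 ≤ Real.log (Fintype.card Y) := Real.log_natCast_nonneg _
  have hlower : ∀ n : ℕ, 0 < n → ∀ s ∈ S, ∀ r ∈ E n,
      n * s - Real.log (1 + n * Real.log (Fintype.card Y)) ≤ r := by
    rintro n hn _ ⟨Q, hQ, rfl⟩ _ ⟨St, hSt, rfl⟩
    linarith [mul_sub_le_log_sum_countG hfull hQ hn hSt]
  have hSbdd : BddAbove S := by
    obtain ⟨r, hr⟩ := hEne 1
    refine ⟨r + Real.log (1 + Real.log (Fintype.card Y)), fun s hs => ?_⟩
    have := hlower 1 one_pos s hs r hr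
    simp only [Nat.cast_one, one_mul] at this
    linarith
  refine Filter.Tendsto.liminf_eq (tendsto_order.2 ⟨fun v hv => ?_, fun v hv => ?_⟩)
  · obtain ⟨s, hs, hvs⟩ := exists_lt_of_lt_csSup hSne hv
    filter_upwards [Filter.eventually_gt_atTop 0,
      (tendsto_log_one_add_mul_div_atTop _ hlogY).eventually_lt_const (sub_pos.2 hvs)]
      with n hn hlog
    have hnR : (0 : ℝ) < n := by exact_mod_cast hn
    have hle := le_csInf (hEne n) (hlower n hn s hs)
    rw [one_div, inv_mul_eq_div, lt_div_iff₀ hnR]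
    rw [div_lt_iff₀ hnR] at hlog
    linarith
  · set ε := (v - sSup S) / 2 with hε
    have hε0 : 0 < ε := half_pos (sub_pos.2 hv)
    obtain ⟨N, hN⟩ := exists_strategy_sum_countG_le hd hzero hD hP hfull
      (fun Q hQ => le_csSup hSbdd ⟨Q, hQ, rfl⟩) hε0
    set k := Fintype.card Z * Fintype.card X with hk
    have hlim : Filter.Tendsto (fun n : ℕ => Real.log 2 / (n : ℝ) +
        2 * k * (Real.log (1 + n * 1) / (n : ℝ))) Filter.atTop (nhds 0) := by
      simpa using (tendsto_const_div_atTop_nhds_zero_nat (Real.log 2)).add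
        ((tendsto_log_one_add_mul_div_atTop 1 zero_le_one).const_mul (2 * k : ℝ))
    filter_upwards [Filter.eventually_gt_atTop 0, Filter.eventually_ge_atTop N,
      hlim.eventually_lt_const hε0] with n hn hNn hlt
    have hnR : (0 : ℝ) < n := by exact_mod_cast hn
    obtain ⟨St, hSt, hle⟩ := hN n hNn hn
    have hbdd : BddBelow (E n) := by
      obtain ⟨s, hs⟩ := hSne
      exact ⟨_, fun r hr => hlower n hn s hs r hr⟩
    set A := ∑ x : Fin n → X, ∑ z : Fin n → Z,
      (∏ i, P (x i) (z i)) * (countG d D (St z) x : ℝ) with hA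
    have hA0 : 0 < A := Finset.sum_pos (fun x _ => Finset.sum_pos (fun z _ => mul_pos
      (Finset.prod_pos fun i _ => hfull _ _) (by
        obtain ⟨y, hy, -⟩ := exists_mem_take_countG (hSt z x)
        have : countG d D (St z) x ≠ 0 := fun h0 => by simp [h0] at hy
        exact_mod_cast Nat.pos_of_ne_zero this)) Finset.univ_nonempty) Finset.univ_nonempty
    have h1 : sInf (E n) ≤ Real.log A := csInf_le hbdd ⟨St, hSt, rfl⟩
    have h2 := Real.log_le_log hA0 hle
    rw [Real.log_mul (by positivity) (Real.exp_ne_zero _), Real.log_exp,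
      Real.log_mul two_ne_zero (by positivity), Real.log_pow, Real.log_pow] at h2
    push_cast at h2
    rw [one_div, inv_mul_eq_div, div_lt_iff₀ hnR]
    have h3 := mul_lt_mul_of_pos_right hlt hnR
    rw [add_mul, mul_assoc, div_mul_cancel₀ _ hnR.ne', div_mul_cancel₀ _ hnR.ne', mul_one,
      add_comm (1 : ℝ)] at h3
    have h4 : v = sSup S + ε + ε := by rw [hε]; ring
    rw [h4]
    linarith
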